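/- arXiv:1309.7580 — 4 statements merged into one kernel-verified Lean document; each statement's English description precedes it below -/
import Mathlib

section
/- For all positive integers u and v there exists a constant κ = κ(u, v) > 0 with the following property. Let p be a prime and define f(x,y) = x^u y^v (x + y). Then for any sets A, B, C ⊆ 𝔽_p^* one has |f(A,B)| · |B·C| ≥ κ · min( |A|·|B|²·|C| / p, p·|B| ). -/
open Pointwise

/-- The incidence indicator of the point `q` and the line `y = l.1 + l.2 x`. -/
noncomputable def incInd {p : ℕ} (l q : ZMod p × ZMod p) : ℝ :=
  if q.2 = l.1 + l.2 * q.1 then 1 else 0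

lemma incInd_sum {p : ℕ} [Fact p.Prime] (l : ZMod p × ZMod p) :
    ∑ q : ZMod p × ZMod p, incInd l q = p := by
  unfold incInd
  rw [Fintype.sum_prod_type]
  simp [ZMod.card]

lemma incInd_sum_mul {p : ℕ} [Fact p.Prime] (l l' : ZMod p × ZMod p) :
    ∑ q : ZMod p × ZMod p, incInd l q * incInd l' q ≤ 1 + if l = l' then (p : ℝ) else 0 := by
  by_cases h : l = l'
  · subst h
    have : ∀ q, incInd l q * incInd l q = incInd l q := by
      intro q; unfold incInd; split_ifs <;> simp
    simp only [this, incInd_sum, if_true]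
    linarith
  · simp only [h, if_false, add_zero]
    have : ∀ q, incInd l q * incInd l' q =
        if (q.2 = l.1 + l.2 * q.1 ∧ q.2 = l'.1 + l'.2 * q.1) then (1:ℝ) else 0 := by
      intro q; unfold incInd; rw [ite_and]; split_ifs <;> simp
    simp only [this, Finset.sum_boole]
    norm_cast
    rw [Finset.card_le_one]
    rintro ⟨x, y⟩ hx ⟨x', y'⟩ hx'
    simp only [Finset.mem_filter, Finset.mem_univ, true_and] at hx hx'
    obtain ⟨h1, h2⟩ := hx
    obtain ⟨h3, h4⟩ := hx'
    have key : (l.2 - l'.2) * (x - x') = 0 := by linear_combination h2 - h1 + h3 - h4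
    rcases mul_eq_zero.1 key with h5 | h5
    · exfalso
      apply h
      have h6 : l.2 = l'.2 := sub_eq_zero.1 h5
      refine Prod.ext ?_ h6
      rw [h6] at h1
      linear_combination h2 - h1
    · have h6 : x = x' := sub_eq_zero.1 h5
      subst h6
      rw [h1, h3]

lemma incidence {p : ℕ} [Fact p.Prime] (L P : Finset (ZMod p × ZMod p)) :
    (∑ q ∈ P, (∑ l ∈ L, incInd l q - (L.card : ℝ) / p)) ^ 2 ≤ P.card * (p * L.card) := by
  have hp : (0 : ℝ) < p := by exact_mod_cast (Fact.out : p.Prime).pos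
  refine sq_sum_le_card_mul_sum_sq.trans ?_
  gcongr
  refine (Finset.sum_le_univ_sum_of_nonneg (fun q => sq_nonneg _)).trans ?_
  have e1 : ∑ q : ZMod p × ZMod p, ∑ l ∈ L, incInd l q = L.card * p := by
    rw [Finset.sum_comm]; simp [incInd_sum]
  have e2 : ∑ q : ZMod p × ZMod p, (∑ l ∈ L, incInd l q) ^ 2 ≤ L.card ^ 2 + L.card * p := by
    simp only [sq, Finset.sum_mul_sum]
    rw [Finset.sum_comm]
    calc _ = ∑ l ∈ L, ∑ l' ∈ L, ∑ q : ZMod p × ZMod p, incInd l q * incInd l' q := by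
          refine Finset.sum_congr rfl fun l _ => Finset.sum_comm
      _ ≤ ∑ l ∈ L, ∑ l' ∈ L, (1 + if l = l' then (p : ℝ) else 0) := by
          gcongr; exact incInd_sum_mul _ _
      _ = _ := by
          simp only [Finset.sum_add_distrib, Finset.sum_ite_eq]
          simp
  have e3 : ∑ q : ZMod p × ZMod p, (∑ l ∈ L, incInd l q - (L.card : ℝ) / p) ^ 2 =
      ∑ q : ZMod p × ZMod p, (∑ l ∈ L, incInd l q) ^ 2 - (L.card : ℝ) ^ 2 := by
    have : ∀ q : ZMod p × ZMod p, (∑ l ∈ L, incInd l q - (L.card : ℝ) / p) ^ 2 =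
      (∑ l ∈ L, incInd l q) ^ 2 - (2 * ((L.card : ℝ) / p)) * (∑ l ∈ L, incInd l q)
        + ((L.card : ℝ) / p) ^ 2 := fun q => by ring
    simp only [this, Finset.sum_add_distrib, Finset.sum_sub_distrib]
    rw [← Finset.mul_sum, e1]
    simp only [Finset.sum_const, Finset.card_univ, Fintype.card_prod, ZMod.card, nsmul_eq_mul]
    push_cast
    field_simp
    ring
  rw [e3]
  linarith

lemma fiber_card {p : ℕ} [Fact p.Prime] (u v : ℕ) (A C : Finset (ZMod p))
    (hA : ∀ a ∈ A, a ≠ 0) (hC : ∀ c ∈ C, c ≠ 0) :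
    (A ×ˢ C).card ≤ (u + v + 1) * ((A ×ˢ C).image
      (fun z => (z.1 ^ (u + 1) / z.2 ^ v, z.1 ^ u / z.2 ^ (v + 1)))).card := by
  apply Finset.card_le_mul_card_image
  rintro ⟨α, β⟩ hb
  have key : ∀ z ∈ (A ×ˢ C).filter
      (fun z => (z.1 ^ (u + 1) / z.2 ^ v, z.1 ^ u / z.2 ^ (v + 1)) = (α, β)),
      z.1 ≠ 0 ∧ z.1 * z.2 = α / β ∧ z.1 ^ (u + v + 1) = α * (α / β) ^ v := by
    rintro ⟨a, c⟩ hz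
    simp only [Finset.mem_filter, Finset.mem_product, Prod.mk.injEq] at hz
    obtain ⟨⟨ha, hc⟩, h1, h2⟩ := hz
    have ha := hA a ha
    have hc := hC c hc
    have h3 : a * c = α / β := by
      rw [← h1, ← h2]; field_simp; ring
    refine ⟨ha, h3, ?_⟩
    rw [← h3, ← h1]
    field_simp
    ring
  refine le_trans ?_ ((Multiset.toFinset_card_le _).trans
    (Polynomial.card_nthRoots (u + v + 1) (α * (α / β) ^ v)))
  apply Finset.card_le_card_of_injOn Prod.fst
  · intro z hz
    have := key z hz
    simp only [Finset.mem_coe, Multiset.mem_toFinset]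
    rw [Polynomial.mem_nthRoots (by omega)]
    exact this.2.2
  · intro z hz z' hz' h
    have h1 := key z hz
    have h2 := key z' hz'
    refine Prod.ext h (mul_left_cancel₀ h1.1 ?_)
    rw [h1.2.1, h, h2.2.1]

/-- Inequality (5.1): for all positive integers `u, v` there is `κ = κ(u,v) > 0` such
that for `f(x,y) = x^u y^v (x+y)` and all `A, B, C ⊆ 𝔽_p^*`,
`|f(A,B)|·|B·C| ≥ κ·min(|A||B|²|C|/p, p|B|)`. -/
theorem stmt_11 (u v : ℕ) (hu : 0 < u) (hv : 0 < v) :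
    ∃ κ : ℝ, 0 < κ ∧ ∀ (p : ℕ), p.Prime →
    ∀ A B C : Finset (ZMod p), (∀ a ∈ A, a ≠ 0) → (∀ b ∈ B, b ≠ 0) → (∀ c ∈ C, c ≠ 0) →
      ((Finset.image₂ (fun x y => x ^ u * y ^ v * (x + y)) A B).card : ℝ) *
          ((B * C).card : ℝ) ≥
        κ * min ((A.card : ℝ) * (B.card : ℝ) ^ 2 * (C.card : ℝ) / (p : ℝ))
          ((p : ℝ) * (B.card : ℝ)) := by
  refine ⟨1 / (4 * (u + v + 1)), by positivity, ?_⟩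
  intro p hpp A B C hA hB hC
  haveI : Fact p.Prime := ⟨hpp⟩
  have hp : (0 : ℝ) < p := by exact_mod_cast hpp.pos
  set S := Finset.image₂ (fun x y => x ^ u * y ^ v * (x + y)) A B with hS
  set D := B * C with hD
  set L := (A ×ˢ C).image
      (fun z => (z.1 ^ (u + 1) / z.2 ^ v, z.1 ^ u / z.2 ^ (v + 1))) with hL
  set P := (S ×ˢ D).image (fun z => (z.2, z.1 / z.2 ^ v)) with hP
  have hPc : (P.card : ℝ) ≤ S.card * D.card := by
    have := Finset.card_image_le (s := S ×ˢ D) (f := fun z => (z.2, z.1 / z.2 ^ v))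
    rw [Finset.card_product] at this
    exact_mod_cast this
  have hLc : (A.card : ℝ) * C.card ≤ (u + v + 1) * L.card := by
    have := fiber_card u v A C hA hC
    rw [Finset.card_product] at this
    exact_mod_cast this
  -- every line carries many points
  have hrich : ∀ l ∈ L, (B.card : ℝ) ≤ ∑ q ∈ P, incInd l q := by
    intro l hl
    rw [hL, Finset.mem_image] at hl
    obtain ⟨⟨a, c⟩, hac, rfl⟩ := hl
    rw [Finset.mem_product] at hac
    have ha := hA a hac.1
    have hc := hC c hac.2
    unfold incInd
    rw [Finset.sum_boole]
    norm_cast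
    apply Finset.card_le_card_of_injOn
      (fun b => (b * c, a ^ u * b ^ v * (a + b) / (b * c) ^ v))
    · intro b hb
      have hb' := hB b hb
      simp only [Finset.mem_coe, Finset.mem_filter]
      refine ⟨?_, ?_⟩
      · rw [hP, Finset.mem_image]
        exact ⟨(a ^ u * b ^ v * (a + b), b * c), Finset.mem_product.2
          ⟨Finset.mem_image₂_of_mem hac.1 hb, Finset.mul_mem_mul hb hac.2⟩, rfl⟩
      · field_simp
        try ring
    · intro b _ b' _ h
      simp only [Prod.mk.injEq] at h
      exact mul_right_cancel₀ hc h.1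
  have hlow : (L.card : ℝ) * B.card - P.card * (L.card / p) ≤
      ∑ q ∈ P, (∑ l ∈ L, incInd l q - (L.card : ℝ) / p) := by
    rw [Finset.sum_sub_distrib, Finset.sum_comm, Finset.sum_const, nsmul_eq_mul]
    have := Finset.sum_le_sum hrich
    rw [Finset.sum_const, nsmul_eq_mul] at this
    linarith
  have hinc := incidence L P
  have hm : (1 : ℝ) ≤ u + v + 1 := by
    have : (0 : ℝ) ≤ (u : ℝ) + v := by positivity
    linarith
  set m : ℝ := u + v + 1 with hmdef
  have hm0 : 0 < m := by linarith
  have hB0 : (0 : ℝ) ≤ B.card := by positivity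
  have hL0 : (0 : ℝ) ≤ L.card := by positivity
  have hP0 : (0 : ℝ) ≤ P.card := by positivity
  refine ge_iff_le.2 (le_trans ?_ hPc)
  rw [one_div, inv_mul_le_iff₀ (by positivity)]
  by_cases hcase : (p : ℝ) * B.card ≤ 2 * P.card
  · refine (min_le_right _ _).trans (hcase.trans ?_)
    nlinarith
  · push Not at hcase
    refine (min_le_left _ _).trans ?_
    rw [div_le_iff₀ hp]
    rcases hL0.eq_or_lt with h0 | hLpos
    · rw [← h0, mul_zero] at hLc
      have : (A.card : ℝ) * (B.card : ℝ) ^ 2 * C.card ≤ 0 := by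
        nlinarith [sq_nonneg (B.card : ℝ)]
      have h2 : 0 ≤ 4 * m * P.card * p := by positivity
      linarith
    · have h1 : (L.card : ℝ) * B.card / 2 ≤ L.card * B.card - P.card * (L.card / p) := by
        have : (P.card : ℝ) / p ≤ B.card / 2 := by
          rw [div_le_iff₀ hp]; linarith
        have := mul_le_mul_of_nonneg_left this hL0
        have e : (P.card : ℝ) * (L.card / p) = L.card * (P.card / p) := by ring
        rw [e]; linarith
      have h2 : ((L.card : ℝ) * B.card / 2) ^ 2 ≤ P.card * (p * L.card) :=
        (pow_le_pow_left₀ (by positivity) (h1.trans hlow) 2).trans hinc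
      have h3 : (L.card : ℝ) * B.card ^ 2 ≤ 4 * P.card * p := by
        refine le_of_mul_le_mul_left ?_ hLpos
        nlinarith
      calc (A.card : ℝ) * (B.card : ℝ) ^ 2 * C.card = (A.card * C.card) * B.card ^ 2 := by ring
        _ ≤ (m * L.card) * B.card ^ 2 := by gcongr
        _ = m * (L.card * B.card ^ 2) := by ring
        _ ≤ m * (4 * P.card * p) := by gcongr
        _ = _ := by ring
end

section
/- For all positive integers u and v there exists a constant κ = κ(u, v) > 0 with the following property. Let p be a prime and define f(x,y) = x^u y^v (x + y). Then for any sets A, B ⊆ 𝔽_p^* one has max( |f(A,B)|, |A·B| ) ≥ κ · min( |A|·|B| / √p, √(p·|B|) ). -/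
open Pointwise

/-- Second moment bound for the number of points of `S` on the lines `y = Q t + P`. -/
lemma second_moment {p : ℕ} [Fact p.Prime] (S : Finset (ZMod p × ZMod p)) :
    ∑ l : ZMod p × ZMod p,
      (((S.filter (fun s => s.2 = l.1 * s.1 + l.2)).card : ℝ) - (S.card : ℝ) / p) ^ 2
      ≤ (p : ℝ) * S.card := by
  have hp0 : (0 : ℝ) < p := by exact_mod_cast (Fact.out : p.Prime).pos
  have hi : ∀ l : ZMod p × ZMod p, ((S.filter (fun s => s.2 = l.1 * s.1 + l.2)).card : ℝ)
      = ∑ s ∈ S, if s.2 = l.1 * s.1 + l.2 then (1 : ℝ) else 0 := by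
    intro l; simp
  have hline : ∀ s : ZMod p × ZMod p,
      ∑ l : ZMod p × ZMod p, (if s.2 = l.1 * s.1 + l.2 then (1 : ℝ) else 0) = p := by
    intro s
    rw [Fintype.sum_prod_type]
    have : ∀ x : ZMod p, ∑ y : ZMod p, (if s.2 = x * s.1 + y then (1 : ℝ) else 0) = 1 := by
      intro x
      rw [Finset.sum_eq_single (s.2 - x * s.1)]
      · simp
      · intro b _ hb
        rw [if_neg]
        intro h; apply hb; rw [h]; ring
      · simp
    simp [this, ZMod.card]
  have h1 : ∑ l : ZMod p × ZMod p, ((S.filter (fun s => s.2 = l.1 * s.1 + l.2)).card : ℝ)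
      = p * S.card := by
    simp_rw [hi]
    rw [Finset.sum_comm]
    simp_rw [hline]
    simp [mul_comm]
  have hpair : ∀ s s' : ZMod p × ZMod p,
      ∑ l : ZMod p × ZMod p, (if s.2 = l.1 * s.1 + l.2 then (1 : ℝ) else 0) *
        (if s'.2 = l.1 * s'.1 + l.2 then (1 : ℝ) else 0) ≤ 1 + if s = s' then (p : ℝ) else 0 := by
    intro s s'
    by_cases h : s = s'
    · subst h
      have := hline s
      simp only [mul_ite, mul_one, mul_zero, if_true]
      rw [← this]
      refine le_trans (Finset.sum_le_sum (fun l _ => ?_)) (le_add_of_nonneg_left zero_le_one)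
      split_ifs <;> simp
    · rw [if_neg h, add_zero]
      simp_rw [mul_ite, mul_one, mul_zero, ← ite_and]
      rw [Finset.sum_boole]
      have : (Finset.univ.filter (fun l : ZMod p × ZMod p =>
          s'.2 = l.1 * s'.1 + l.2 ∧ s.2 = l.1 * s.1 + l.2)).card ≤ 1 := by
        rw [Finset.card_le_one]
        rintro ⟨q, r⟩ h1 ⟨q', r'⟩ h2
        simp only [Finset.mem_filter, Finset.mem_univ, true_and] at h1 h2
        obtain ⟨e2, e1⟩ := h1
        obtain ⟨e4, e3⟩ := h2
        have hne : s.1 ≠ s'.1 := by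
          intro he
          apply h
          apply Prod.ext he
          rw [e1, e2, he]
        have hq : (q - q') * (s.1 - s'.1) = 0 := by
          linear_combination e3 - e1 - e4 + e2
        have hq' : q = q' := by
          rcases mul_eq_zero.1 hq with h0 | h0
          · exact sub_eq_zero.1 h0
          · exact absurd (sub_eq_zero.1 h0) hne
        subst hq'
        have : r = r' := by linear_combination e3 - e1
        rw [this]
      exact_mod_cast this
  have h2 : ∑ l : ZMod p × ZMod p, ((S.filter (fun s => s.2 = l.1 * s.1 + l.2)).card : ℝ) ^ 2
      ≤ p * S.card + (S.card : ℝ) ^ 2 := by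
    simp_rw [hi, sq, Finset.sum_mul_sum]
    rw [Finset.sum_comm]
    calc _ = ∑ s ∈ S, ∑ s' ∈ S, ∑ l : ZMod p × ZMod p,
          (if s.2 = l.1 * s.1 + l.2 then (1 : ℝ) else 0) *
          (if s'.2 = l.1 * s'.1 + l.2 then (1 : ℝ) else 0) := by
            refine Finset.sum_congr rfl (fun s _ => ?_)
            rw [Finset.sum_comm]
      _ ≤ ∑ s ∈ S, ∑ s' ∈ S, (1 + if s = s' then (p : ℝ) else 0) :=
          Finset.sum_le_sum (fun s _ => Finset.sum_le_sum (fun s' _ => hpair s s'))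
      _ = _ := by
          simp only [Finset.sum_add_distrib, Finset.sum_ite_eq, Finset.sum_const, nsmul_eq_mul,
            mul_one]
          rw [Finset.sum_congr rfl (fun s hs => if_pos hs)]
          simp
          ring
  have hexp : ∑ l : ZMod p × ZMod p,
      (((S.filter (fun s => s.2 = l.1 * s.1 + l.2)).card : ℝ) - (S.card : ℝ) / p) ^ 2
      = ∑ l : ZMod p × ZMod p, ((S.filter (fun s => s.2 = l.1 * s.1 + l.2)).card : ℝ) ^ 2
        - 2 * ((S.card : ℝ) / p) *
          ∑ l : ZMod p × ZMod p, ((S.filter (fun s => s.2 = l.1 * s.1 + l.2)).card : ℝ)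
        + (p : ℝ) ^ 2 * ((S.card : ℝ) / p) ^ 2 := by
    simp_rw [sub_sq]
    rw [Finset.sum_add_distrib, Finset.sum_sub_distrib, Finset.mul_sum]
    congr 1
    · congr 1
      refine Finset.sum_congr rfl (fun l _ => ?_)
      ring
    · simp only [Finset.sum_const, Finset.card_univ, Fintype.card_prod, ZMod.card, nsmul_eq_mul]
      push_cast
      ring
  rw [hexp, h1]
  have e1 : 2 * ((S.card : ℝ) / p) * (p * S.card) = 2 * (S.card : ℝ) ^ 2 := by field_simp
  have e2 : (p : ℝ) ^ 2 * ((S.card : ℝ) / p) ^ 2 = (S.card : ℝ) ^ 2 := by field_simp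
  rw [e1, e2]
  linarith

/-- Weighted incidence bound. -/
lemma incidence_s12 {p : ℕ} [Fact p.Prime] (S X : Finset (ZMod p × ZMod p))
    (φ : ZMod p × ZMod p → ZMod p × ZMod p) (k : ℕ)
    (hk : ∀ l, (X.filter (fun x => φ x = l)).card ≤ k) :
    ∑ x ∈ X, ((S.filter (fun s => s.2 = (φ x).1 * s.1 + (φ x).2)).card : ℝ)
      ≤ (X.card : ℝ) * S.card / p + √((k : ℝ) * p * (X.card * S.card)) := by
  set g : ZMod p × ZMod p → ℝ := fun l =>
    ((S.filter (fun s => s.2 = l.1 * s.1 + l.2)).card : ℝ) - (S.card : ℝ) / p with hg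
  have h1 : ∑ x ∈ X, (g (φ x)) ^ 2 ≤ k * (p * S.card) := by
    calc ∑ x ∈ X, (g (φ x)) ^ 2
        = ∑ l ∈ X.image φ, (X.filter (fun x => φ x = l)).card • (g l) ^ 2 :=
          Finset.sum_comp (fun l => (g l) ^ 2) φ
      _ ≤ ∑ l ∈ X.image φ, (k : ℝ) * (g l) ^ 2 := by
          refine Finset.sum_le_sum (fun l _ => ?_)
          rw [nsmul_eq_mul]
          have : ((X.filter (fun x => φ x = l)).card : ℝ) ≤ k := by exact_mod_cast hk l
          gcongr
      _ ≤ ∑ l, (k : ℝ) * (g l) ^ 2 :=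
          Finset.sum_le_sum_of_subset_of_nonneg (Finset.subset_univ _)
            (fun _ _ _ => by positivity)
      _ ≤ _ := by
          rw [← Finset.mul_sum]
          have := second_moment S
          gcongr
  have h2 : (∑ x ∈ X, g (φ x)) ^ 2 ≤ (k : ℝ) * p * (X.card * S.card) := by
    refine le_trans (sq_sum_le_card_mul_sum_sq) ?_
    calc _ ≤ (X.card : ℝ) * (k * (p * S.card)) := by gcongr
      _ = _ := by ring
  have h3 := Real.le_sqrt_of_sq_le h2
  have h4 : ∑ x ∈ X, g (φ x) =
      ∑ x ∈ X, ((S.filter (fun s => s.2 = (φ x).1 * s.1 + (φ x).2)).card : ℝ)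
        - (X.card : ℝ) * S.card / p := by
    simp only [hg, Finset.sum_sub_distrib, Finset.sum_const, nsmul_eq_mul]
    ring
  linarith

lemma fiber_bound {p : ℕ} [Fact p.Prime] (u v : ℕ) (X : Finset (ZMod p × ZMod p))
    (hX : ∀ x ∈ X, x.1 ≠ 0 ∧ x.2 ≠ 0) (l : ZMod p × ZMod p) :
    (X.filter (fun x => (x.2 ^ u * x.1 ^ (v + 1), x.2 ^ (u + 1) * x.1 ^ v) = l)).card
      ≤ u + v + 1 := by
  classical
  obtain ⟨Q, P⟩ := l
  have hsub : (X.filter (fun x => (x.2 ^ u * x.1 ^ (v + 1), x.2 ^ (u + 1) * x.1 ^ v)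
      = (Q, P))).card ≤ (Polynomial.nthRoots (u + v + 1) (P ^ (v + 1) / Q ^ v)).toFinset.card := by
    apply Finset.card_le_card_of_injOn Prod.snd
    · rintro ⟨c, a⟩ hx
      simp only [Finset.coe_filter, Set.mem_ofPred_eq, Prod.mk.injEq] at hx
      obtain ⟨hm, rfl, rfl⟩ := hx
      obtain ⟨hc, ha⟩ := hX _ hm
      simp only at hc ha
      simp only [Finset.mem_coe, Multiset.mem_toFinset]
      rw [Polynomial.mem_nthRoots (by omega), eq_div_iff (by positivity)]
      ring
    · rintro ⟨c, a⟩ hx ⟨c', a'⟩ hx' h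
      simp only [Finset.coe_filter, Set.mem_ofPred_eq, Prod.mk.injEq] at hx hx' h
      subst h
      obtain ⟨hm, rfl, rfl⟩ := hx
      obtain ⟨hm', e1, e2⟩ := hx'
      obtain ⟨hc, ha⟩ := hX _ hm
      simp only at hc ha
      have hau : a ^ u ≠ 0 := pow_ne_zero _ ha
      have hau' : a ^ (u + 1) ≠ 0 := pow_ne_zero _ ha
      have e3 := mul_left_cancel₀ hau e1
      have e4 := mul_left_cancel₀ hau' e2
      rw [pow_succ, pow_succ, e4] at e3
      have := mul_left_cancel₀ (pow_ne_zero v hc) e3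
      rw [this]
  refine hsub.trans ((Multiset.toFinset_card_le _).trans (Polynomial.card_nthRoots _ _))

lemma key_ineq {p : ℕ} [Fact p.Prime] (u v : ℕ) (A B : Finset (ZMod p))
    (hA : ∀ a ∈ A, a ≠ 0) (hB : ∀ b ∈ B, b ≠ 0) (C D : Finset (ZMod p))
    (hC : C = A * B) (hD : D = Finset.image₂ (fun x y => x ^ u * y ^ v * (x + y)) A B) :
    (A.card : ℝ) ^ 2 * B.card ≤ ((C.card : ℝ) * A.card) * (D.card * A.card) / p
      + √(((u + v + 1 : ℕ) : ℝ) * p * ((C.card * A.card) * (D.card * A.card))) := by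
  classical
  set S : Finset (ZMod p × ZMod p) := (D ×ˢ A).image (fun x => (x.2⁻¹, x.1 * x.2 ^ v)) with hS
  set X : Finset (ZMod p × ZMod p) := C ×ˢ A with hXdef
  have hX : ∀ x ∈ X, x.1 ≠ 0 ∧ x.2 ≠ 0 := by
    rintro ⟨c, a⟩ hx
    rw [hXdef, Finset.mem_product] at hx
    refine ⟨?_, hA _ hx.2⟩
    have := hx.1
    rw [hC, Finset.mem_mul] at this
    obtain ⟨a, ha, b, hb, h⟩ := this
    rw [← h]
    exact mul_ne_zero (hA a ha) (hB b hb)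
  have hSc : (S.card : ℝ) ≤ D.card * A.card := by
    have := (Finset.card_image_le (s := D ×ˢ A)
      (f := fun x : ZMod p × ZMod p => (x.2⁻¹, x.1 * x.2 ^ v)))
    rw [Finset.card_product] at this
    exact_mod_cast this
  have hXc : (X.card : ℝ) = C.card * A.card := by
    rw [hXdef, Finset.card_product]; push_cast; ring
  have hinc := incidence_s12 S X (fun x => (x.2 ^ u * x.1 ^ (v + 1), x.2 ^ (u + 1) * x.1 ^ v))
    (u + v + 1) (fiber_bound u v X hX)
  have hlow : A.card ^ 2 * B.card ≤ ∑ x ∈ X, (S.filter (fun s =>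
      s.2 = (x.2 ^ u * x.1 ^ (v + 1)) * s.1 + x.2 ^ (u + 1) * x.1 ^ v)).card := by
    rw [← Finset.card_sigma, sq, ← Finset.card_product, ← Finset.card_product]
    apply Finset.card_le_card_of_injOn (fun t : (ZMod p × ZMod p) × ZMod p =>
      (⟨(t.1.1 * t.2, t.1.2), (t.1.1⁻¹, (t.1.2 ^ u * t.2 ^ v * (t.1.2 + t.2)) * t.1.1 ^ v)⟩ :
        (_ : ZMod p × ZMod p) × (ZMod p × ZMod p)))
    · rintro ⟨⟨a, a'⟩, b⟩ ht
      simp only [Finset.mem_coe, Finset.mem_product] at ht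
      obtain ⟨⟨ha, ha'⟩, hb⟩ := ht
      simp only [Finset.mem_coe, Finset.mem_sigma, Finset.mem_filter]
      refine ⟨?_, ?_, ?_⟩
      · rw [hXdef, Finset.mem_product]
        exact ⟨by rw [hC]; exact Finset.mul_mem_mul ha hb, ha'⟩
      · rw [hS, Finset.mem_image]
        refine ⟨(a' ^ u * b ^ v * (a' + b), a), ?_, rfl⟩
        rw [Finset.mem_product]
        refine ⟨?_, ha⟩
        rw [hD, Finset.mem_image₂]
        exact ⟨a', ha', b, hb, rfl⟩
      · have := hA a ha
        field_simp
        ring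
    · rintro ⟨⟨a, a'⟩, b⟩ ht ⟨⟨a1, a1'⟩, b1⟩ ht1 h
      simp only [Finset.mem_coe, Finset.mem_product] at ht ht1
      simp only [Sigma.mk.injEq, heq_eq_eq, Prod.mk.injEq] at h
      obtain ⟨⟨h1, h2⟩, h3, -⟩ := h
      have h4 := inv_injective h3
      subst h4
      have := mul_left_cancel₀ (hA a ht.1.1) h1
      rw [h2, this]
  have hlow' : (A.card : ℝ) ^ 2 * B.card ≤ ∑ x ∈ X, ((S.filter (fun s =>
      s.2 = (x.2 ^ u * x.1 ^ (v + 1)) * s.1 + x.2 ^ (u + 1) * x.1 ^ v)).card : ℝ) := by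
    exact_mod_cast hlow
  refine (hlow'.trans hinc).trans ?_
  rw [hXc]
  gcongr

/-- Remark after (5.1): for all positive integers `u, v` there is `κ = κ(u,v) > 0`
such that for `f(x,y) = x^u y^v (x+y)` and all `A, B ⊆ 𝔽_p^*`,
`max(|f(A,B)|, |A·B|) ≥ κ·min(|A||B|/√p, √(p|B|))`. -/
theorem stmt_12 (u v : ℕ) (hu : 0 < u) (hv : 0 < v) :
    ∃ κ : ℝ, 0 < κ ∧ ∀ (p : ℕ), p.Prime →
    ∀ A B : Finset (ZMod p), (∀ a ∈ A, a ≠ 0) → (∀ b ∈ B, b ≠ 0) →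
      max ((Finset.image₂ (fun x y => x ^ u * y ^ v * (x + y)) A B).card : ℝ)
          ((A * B).card : ℝ) ≥
        κ * min ((A.card : ℝ) * (B.card : ℝ) / Real.sqrt p)
          (Real.sqrt ((p : ℝ) * (B.card : ℝ))) := by
  refine ⟨1 / (2 * ((u + v + 1 : ℕ) : ℝ)), by positivity, ?_⟩
  intro p hp A B hA hB
  haveI : Fact p.Prime := ⟨hp⟩
  have hkey := key_ineq u v A B hA hB _ _ rfl rfl
  set C : ℝ := ((A * B).card : ℝ) with hC
  set D : ℝ := ((Finset.image₂ (fun x y => x ^ u * y ^ v * (x + y)) A B).card : ℝ) with hD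
  set M : ℝ := max D C with hM
  have hk1 : (1 : ℝ) ≤ ((u + v + 1 : ℕ) : ℝ) := by exact_mod_cast (by omega)
  set k : ℝ := ((u + v + 1 : ℕ) : ℝ) with hk
  have hp0 : (0 : ℝ) < p := by exact_mod_cast hp.pos
  have hC0 : 0 ≤ C := by positivity
  have hD0 : 0 ≤ D := by positivity
  have hM0 : 0 ≤ M := le_trans hD0 (le_max_left _ _)
  have hCM : C ≤ M := le_max_right _ _
  have hDM : D ≤ M := le_max_left _ _
  have ha0 : (0 : ℝ) ≤ A.card := by positivity
  set a : ℝ := (A.card : ℝ) with ha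
  have hb0 : (0 : ℝ) ≤ B.card := by positivity
  set b : ℝ := (B.card : ℝ) with hb
  clear_value C D M k a b
  rcases ha0.eq_or_lt with h0 | hapos
  · rw [← h0]
    have : min (0 * b / √(p : ℝ)) √((p : ℝ) * b) ≤ 0 := by
      refine (min_le_left _ _).trans (by simp)
    have h2 : 1 / (2 * k) * min (0 * b / √(p : ℝ)) √((p : ℝ) * b) ≤ 0 :=
      mul_nonpos_of_nonneg_of_nonpos (by positivity) this
    linarith
  have hsp : 0 < √(p : ℝ) := Real.sqrt_pos.2 hp0
  have hkey2 : a ^ 2 * b ≤ M ^ 2 * a ^ 2 / p + k * √(p : ℝ) * M * a := by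
    refine hkey.trans (add_le_add ?_ ?_)
    · calc C * a * (D * a) / p ≤ M * a * (M * a) / p := by gcongr
        _ = _ := by ring
    · apply Real.sqrt_le_iff.2
      refine ⟨by positivity, ?_⟩
      calc k * p * (C * a * (D * a)) ≤ k * p * (M * a * (M * a)) := by gcongr
        _ ≤ (k * k) * p * (M * a * (M * a)) := by gcongr; nlinarith
        _ = (k * √(p : ℝ) * M * a) ^ 2 := by
          rw [mul_pow, mul_pow, mul_pow, Real.sq_sqrt hp0.le]; ring
  have hkey3 : a * b ≤ M ^ 2 * a / p + k * √(p : ℝ) * M := by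
    refine le_of_mul_le_mul_right ?_ hapos
    calc a * b * a = a ^ 2 * b := by ring
      _ ≤ _ := hkey2
      _ = _ := by ring
  rcases le_total (k * √(p : ℝ) * M) (a * b / 2) with hc | hc
  · have h1 : a * b / 2 ≤ M ^ 2 * a / p := by linarith
    rw [le_div_iff₀ hp0] at h1
    have h2 : p * b ≤ 2 * M ^ 2 := by
      refine le_of_mul_le_mul_right ?_ hapos
      linarith
    have h3 : √((p : ℝ) * b) ≤ 2 * k * M := by
      apply Real.sqrt_le_iff.2
      refine ⟨by positivity, ?_⟩
      have : M ^ 2 ≤ k ^ 2 * M ^ 2 := by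
        have : 1 ≤ k ^ 2 := by nlinarith
        nlinarith [sq_nonneg M]
      nlinarith [sq_nonneg M]
    calc 1 / (2 * k) * min (a * b / √(p : ℝ)) √((p : ℝ) * b)
        ≤ 1 / (2 * k) * (2 * k * M) := by
          gcongr
          exact (min_le_right _ _).trans h3
      _ = M := by field_simp
  · calc 1 / (2 * k) * min (a * b / √(p : ℝ)) √((p : ℝ) * b)
        ≤ 1 / (2 * k) * (2 * k * M) := by
          gcongr
          refine (min_le_left _ _).trans ?_
          rw [div_le_iff₀ hsp]
          linarith
      _ = M := by field_simp
end

section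
/- Fix a positive integer k, positive integers m and m', a real α with 1/2 < α < 1, and reals 0 < c₁ < c₂. Then there exist Δ > 0 and κ > 0 (depending only on k, m, m', α, c₁, c₂) with the following property. Let p be a prime, G a subgroup of 𝔽_p^*, and g, h : G → 𝔽_p^* functions such that: (i) for every z ∈ G, the sets {g(xz)/g(x) : x ∈ G} and {h(xz)/h(x) : x ∈ G} each have at most m elements; (ii) for every u ∈ G, μ of the function x ↦ g(x)·h(ux)·x on G is at most m. Define f(x,y) = g(x)h(y)(x^k + y^k). Let w : G → 𝔽_p^* be a function with μ(w) ≤ m', and let P_w(f)(x,y) = w(x)·f(x,y). Then for every set A ⊆ G with c₁·p^α < |A| < c₂·p^α one has max( |f(A,A)|, |P_w(f)(A,A)| ) ≥ κ · |A|^{1+Δ}. -/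
open Pointwise

section AuxSection
open Finset


lemma aux_powcard {p : ℕ} [Fact p.Prime] (k : ℕ) (hk : 0 < k) (A : Finset (ZMod p)) (u : ZMod p) :
    (A.filter fun x => x ^ k = u).card ≤ k := by
  classical
  calc (A.filter fun x => x ^ k = u).card ≤ (Polynomial.nthRoots k u).toFinset.card := by
        apply card_le_card
        intro x hx
        simp only [mem_filter] at hx
        simp [Polynomial.mem_nthRoots hk, hx.2]
    _ ≤ Multiset.card (Polynomial.nthRoots k u) := Multiset.toFinset_card_le _
    _ ≤ k := Polynomial.card_nthRoots k u

lemma aux_corr {p : ℕ} [Fact p.Prime] (χ : DirichletCharacter ℂ p) (hχ : χ ≠ 1) (a b : ZMod p)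
    (hab : a ≠ b) : ∑ u, χ (u + a) * star (χ (u + b)) = -1 := by
  have hc : a - b ≠ 0 := sub_ne_zero.mpr hab
  have h1 : ∑ u, χ (u + a) * star (χ (u + b)) = ∑ v, χ (v + (a - b)) * star (χ v) := by
    rw [← Equiv.sum_comp (Equiv.addRight b) (fun v => χ (v + (a - b)) * star (χ v))]
    apply sum_congr rfl
    intro u _
    simp
  have h2 : ∑ v, χ (v + (a - b)) * star (χ v) = ∑ z, χ (z⁻¹ + (a - b)) * χ z := by
    rw [← Equiv.sum_comp (Equiv.inv (ZMod p)) (fun v => χ (v + (a - b)) * star (χ v))]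
    apply sum_congr rfl
    intro u _
    simp only [Equiv.inv_apply]
    rw [MulChar.star_apply', MulChar.inv_apply', inv_inv]
  have h3 : ∀ z, χ (z⁻¹ + (a - b)) * χ z = χ (1 + (a - b) * z) - if z = 0 then 1 else 0 := by
    intro z
    by_cases hz : z = 0
    · subst hz; simp [MulChar.map_zero]
    · rw [← map_mul, add_mul, inv_mul_cancel₀ hz]; simp [hz]
  rw [h1, h2]
  simp only [h3, sum_sub_distrib]
  have h4 : ∑ z, χ (1 + (a - b) * z) = ∑ z, χ z := by
    rw [← Equiv.sum_comp ((Equiv.mulLeft₀ (a-b) hc).trans (Equiv.addLeft 1)) (fun z => χ z)]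
    rfl
  rw [h4, MulChar.sum_eq_zero_of_ne_one hχ]
  simp

lemma aux_fiber {p : ℕ} [Fact p.Prime] (k : ℕ) (hk : 0 < k) (A : Finset (ZMod p))
    (F : ZMod p → ℝ) (hF : ∀ u, 0 ≤ F u) : ∑ x ∈ A, F (x ^ k) ≤ k * ∑ u, F u := by
  rw [← sum_fiberwise A (fun x => x ^ k), mul_sum]
  apply sum_le_sum
  intro u _
  have : ∑ x ∈ A with x ^ k = u, F (x ^ k) = (A.filter fun x => x ^ k = u).card * F u := by
    rw [← nsmul_eq_mul, ← sum_const]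
    apply sum_congr rfl
    intro x hx
    rw [(mem_filter.mp hx).2]
  rw [this]
  have := aux_powcard k hk A u
  have h := hF u
  gcongr

lemma aux_second {p : ℕ} [Fact p.Prime] (k : ℕ) (hk : 0 < k) (A : Finset (ZMod p))
    (χ : DirichletCharacter ℂ p) (hχ : χ ≠ 1) (β : ZMod p → ℂ) (hβ : ∀ y, ‖β y‖ ≤ 1) :
    ∑ u, ‖∑ y ∈ A, β y * χ (u + y ^ k)‖ ^ 2 ≤ (k + 1) * A.card * p := by
  have key : ((∑ u, ‖∑ y ∈ A, β y * χ (u + y ^ k)‖ ^ 2 : ℝ) : ℂ)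
      = ∑ y ∈ A, ∑ z ∈ A, β y * star (β z) * ∑ u, χ (u + y ^ k) * star (χ (u + z ^ k)) := by
    push_cast
    simp_rw [← Complex.mul_conj', map_sum, sum_mul_sum, mul_sum]
    rw [sum_comm]
    apply sum_congr rfl
    intro y _
    rw [sum_comm]
    apply sum_congr rfl
    intro z _
    apply sum_congr rfl
    intro u _
    simp only [map_mul, Complex.star_def]
    ring
  have hA : (A.card : ℝ) ≤ p := by
    have := card_le_univ A
    rw [ZMod.card] at this
    exact_mod_cast this
  have hin : ∀ y z : ZMod p, ‖∑ u, χ (u + y ^ k) * star (χ (u + z ^ k))‖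
      ≤ (if z ^ k = y ^ k then (p : ℝ) else 0) + 1 := by
    intro y z
    split_ifs with h
    · rw [h]
      refine (norm_sum_le _ _).trans ?_
      refine (sum_le_card_nsmul univ _ 1 ?_).trans ?_
      · intro u _
        rw [norm_mul, norm_star]
        have := χ.norm_le_one (u + y ^ k)
        have h0 := norm_nonneg (χ (u + y ^ k))
        nlinarith
      · simp [ZMod.card]
    · rw [aux_corr χ hχ _ _ (fun e => h e.symm)]
      simp
  have h2 : ∑ u, ‖∑ y ∈ A, β y * χ (u + y ^ k)‖ ^ 2
      ≤ ∑ y ∈ A, ∑ z ∈ A, ((if z ^ k = y ^ k then (p : ℝ) else 0) + 1) := by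
    have e : ∑ u, ‖∑ y ∈ A, β y * χ (u + y ^ k)‖ ^ 2 =
        ‖((∑ u, ‖∑ y ∈ A, β y * χ (u + y ^ k)‖ ^ 2 : ℝ) : ℂ)‖ := by
      rw [Complex.norm_real, Real.norm_of_nonneg (by positivity)]
    rw [e, key]
    refine (norm_sum_le _ _).trans (sum_le_sum fun y _ => ?_)
    refine (norm_sum_le _ _).trans (sum_le_sum fun z _ => ?_)
    rw [norm_mul, norm_mul, norm_star]
    calc ‖β y‖ * ‖β z‖ * _ ≤ 1 * 1 * _ := by
          gcongr
          · exact hβ y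
          · exact hβ z
      _ ≤ _ := by rw [one_mul, one_mul]; exact hin y z
  refine h2.trans ?_
  have h3 : ∀ y ∈ A, ∑ z ∈ A, ((if z ^ k = y ^ k then (p : ℝ) else 0) + 1) ≤ (k + 1) * p := by
    intro y _
    rw [sum_add_distrib, ← sum_filter, sum_const, sum_const, nsmul_eq_mul, nsmul_eq_mul, mul_one]
    have : ((A.filter fun z => z ^ k = y ^ k).card : ℝ) ≤ k := by
      exact_mod_cast aux_powcard k hk A (y ^ k)
    nlinarith [Nat.cast_nonneg (α := ℝ) p]
  refine (sum_le_card_nsmul A _ _ h3).trans ?_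
  rw [nsmul_eq_mul]
  exact le_of_eq (by ring)

lemma aux_bilin {p : ℕ} [Fact p.Prime] (k : ℕ) (hk : 0 < k) (A : Finset (ZMod p))
    (χ : DirichletCharacter ℂ p) (hχ : χ ≠ 1) (α β : ZMod p → ℂ) (hα : ∀ y, ‖α y‖ ≤ 1)
    (hβ : ∀ y, ‖β y‖ ≤ 1) :
    ‖∑ x ∈ A, ∑ y ∈ A, α x * β y * χ (x ^ k + y ^ k)‖ ≤ (k + 1) * A.card * Real.sqrt p := by
  have h1 : ‖∑ x ∈ A, ∑ y ∈ A, α x * β y * χ (x ^ k + y ^ k)‖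
      ≤ ∑ x ∈ A, ‖∑ y ∈ A, β y * χ (x ^ k + y ^ k)‖ := by
    refine (norm_sum_le _ _).trans (sum_le_sum fun x _ => ?_)
    simp_rw [mul_assoc]
    rw [← mul_sum, norm_mul]
    exact mul_le_of_le_one_left (norm_nonneg _) (hα x)
  refine h1.trans (abs_le_of_sq_le_sq' ?_ (by positivity)).2
  refine sq_sum_le_card_mul_sum_sq.trans ?_
  have h2 := aux_fiber k hk A (fun u => ‖∑ y ∈ A, β y * χ (u + y ^ k)‖ ^ 2) (fun u => by positivity)
  have h3 := aux_second k hk A χ hχ β hβ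
  have h4 : ∑ x ∈ A, ‖∑ y ∈ A, β y * χ (x ^ k + y ^ k)‖ ^ 2 ≤ k * ((k + 1) * A.card * p) :=
    h2.trans (by gcongr)
  calc _ ≤ (A.card : ℝ) * (k * ((k + 1) * A.card * p)) := by gcongr
    _ ≤ (A.card : ℝ) * ((k + 1) * ((k + 1) * A.card * p)) := by gcongr; linarith
    _ = _ := by
      rw [mul_pow, mul_pow, Real.sq_sqrt (by positivity)]; ring

lemma aux_parseval {p : ℕ} [Fact p.Prime] {ι : Type*} (I : Finset ι) (v : ι → ZMod p)
    (hv : ∀ i ∈ I, v i ≠ 0) (M : ℝ) (hM : ∀ i ∈ I, ((I.filter fun j => v j = v i).card : ℝ) ≤ M) :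
    ∑ χ : DirichletCharacter ℂ p, ‖∑ i ∈ I, χ (v i)‖ ^ 2 ≤ (p - 1) * (I.card * M) := by
  have hp1 : (1 : ℝ) ≤ p := by exact_mod_cast (Fact.out : p.Prime).one_le
  have key : ((∑ χ : DirichletCharacter ℂ p, ‖∑ i ∈ I, χ (v i)‖ ^ 2 : ℝ) : ℂ)
      = (((p - 1) * ∑ i ∈ I, ((I.filter fun j => v j = v i).card : ℝ) : ℝ) : ℂ) := by
    push_cast
    simp_rw [← Complex.mul_conj', map_sum, sum_mul_sum]
    rw [sum_comm, mul_sum]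
    apply sum_congr rfl
    intro i hi
    rw [sum_comm]
    have : ∀ j ∈ I, ∑ χ : DirichletCharacter ℂ p, χ (v i) * (starRingEnd ℂ) (χ (v j))
        = if v j = v i then ((p : ℂ) - 1) else 0 := by
      intro j hj
      have h := DirichletCharacter.sum_char_inv_mul_char_eq ℂ (isUnit_iff_ne_zero.mpr (hv j hj)) (v i)
      rw [Nat.totient_prime Fact.out, Nat.cast_sub (Fact.out : p.Prime).one_le, Nat.cast_one] at h
      rw [← h]
      apply sum_congr rfl
      intro χ _
      rw [← Complex.star_def, MulChar.star_apply', MulChar.inv_apply', mul_comm]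
    rw [sum_congr rfl this, ← sum_filter, sum_const, nsmul_eq_mul, mul_comm]
  rw [Complex.ofReal_inj.mp key]
  refine mul_le_mul_of_nonneg_left ?_ (by linarith)
  refine (sum_le_card_nsmul I _ _ hM).trans ?_
  rw [nsmul_eq_mul]


set_option maxHeartbeats 1000000 in
lemma aux_upper {p : ℕ} [Fact p.Prime] (k m' : ℕ) (hk : 0 < k) (A T : Finset (ZMod p))
    (hT : (0 : ZMod p) ∉ T) (g h w : ZMod p → ZMod p) (hw : ∀ x ∈ A, w x ≠ 0)
    (hm' : ∀ t, (A.filter fun x => w x = t).card ≤ m') :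
    ∑ x ∈ A, ∑ y ∈ A, ((A.filter fun z => w z * (g x * h y * (x ^ k + y ^ k)) ∈ T).card : ℝ)
      ≤ T.card * A.card ^ 3 / (p - 1)
        + (k + 1) * A.card * Real.sqrt p * Real.sqrt (T.card * m' * A.card) := by
  classical
  set f : ZMod p → ZMod p → ZMod p := fun x y => g x * h y * (x ^ k + y ^ k) with hf
  have hp1 : (1 : ℝ) < p := by exact_mod_cast (Fact.out : p.Prime).one_lt
  set C : ℝ := ∑ x ∈ A, ∑ y ∈ A, ((A.filter fun z => w z * f x y ∈ T).card : ℝ) with hC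
  have hC0 : 0 ≤ C := sum_nonneg fun x _ => sum_nonneg fun y _ => Nat.cast_nonneg _
  have key : (((p - 1) * C : ℝ) : ℂ) = ∑ χ : DirichletCharacter ℂ p,
      (∑ t ∈ T, χ t⁻¹) * (∑ z ∈ A, χ (w z)) *
        (∑ x ∈ A, ∑ y ∈ A, χ (g x) * χ (h y) * χ (x ^ k + y ^ k)) := by
    have h1 : ∀ b : ZMod p, ∑ t ∈ T, ∑ χ : DirichletCharacter ℂ p, χ t⁻¹ * χ b
        = if b ∈ T then ((p : ℂ) - 1) else 0 := by
      intro b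
      rw [← sum_ite_eq' T b (fun _ => (p : ℂ) - 1)]
      apply sum_congr rfl
      intro t ht
      have h := DirichletCharacter.sum_char_inv_mul_char_eq ℂ
        (isUnit_iff_ne_zero.mpr (fun e : t = 0 => hT (e ▸ ht))) b
      rw [Nat.totient_prime Fact.out, Nat.cast_sub (Fact.out : p.Prime).one_le, Nat.cast_one] at h
      rw [h]
    have h2 : (((p - 1) * C : ℝ) : ℂ) = ∑ x ∈ A, ∑ y ∈ A, ∑ z ∈ A, ∑ t ∈ T,
        ∑ χ : DirichletCharacter ℂ p, χ t⁻¹ * χ (w z * f x y) := by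
      simp_rw [h1, hC]
      push_cast
      simp_rw [mul_sum, ← sum_filter, sum_const, nsmul_eq_mul]
      apply sum_congr rfl
      intro x _
      apply sum_congr rfl
      intro y _
      rw [mul_comm]
    rw [h2]
    have h3 : ∀ χ : DirichletCharacter ℂ p, (∑ t ∈ T, χ t⁻¹) * (∑ z ∈ A, χ (w z)) *
        (∑ x ∈ A, ∑ y ∈ A, χ (g x) * χ (h y) * χ (x ^ k + y ^ k))
        = ∑ x ∈ A, ∑ y ∈ A, ∑ z ∈ A, ∑ t ∈ T, χ t⁻¹ * χ (w z * f x y) := by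
      intro χ
      rw [mul_sum]
      apply sum_congr rfl
      intro x _
      rw [mul_sum]
      apply sum_congr rfl
      intro y _
      rw [mul_comm (∑ t ∈ T, χ t⁻¹), sum_mul_sum, sum_mul]
      apply sum_congr rfl
      intro z _
      rw [sum_mul]
      apply sum_congr rfl
      intro t _
      simp only [hf, map_mul]
      ring
    simp_rw [h3]
    rw [sum_comm (s := (univ : Finset (DirichletCharacter ℂ p)))]
    apply sum_congr rfl
    intro x _
    rw [sum_comm (s := (univ : Finset (DirichletCharacter ℂ p)))]
    apply sum_congr rfl
    intro y _
    rw [sum_comm (s := (univ : Finset (DirichletCharacter ℂ p)))]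
    apply sum_congr rfl
    intro z _
    rw [sum_comm (s := (univ : Finset (DirichletCharacter ℂ p)))]
  set B : ℝ := (k + 1) * A.card * Real.sqrt p with hB
  have hB0 : 0 ≤ B := by positivity
  have hterm : ∀ χ : DirichletCharacter ℂ p, ‖(∑ t ∈ T, χ t⁻¹) * (∑ z ∈ A, χ (w z)) *
        (∑ x ∈ A, ∑ y ∈ A, χ (g x) * χ (h y) * χ (x ^ k + y ^ k))‖ ≤
        (if χ = 1 then (T.card * A.card ^ 3 : ℝ) else 0)
          + B * (‖∑ t ∈ T, χ t⁻¹‖ * ‖∑ z ∈ A, χ (w z)‖) := by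
    intro χ
    rw [norm_mul, norm_mul]
    split_ifs with hχ
    · have e1 : ‖∑ t ∈ T, χ t⁻¹‖ ≤ T.card := by
        refine (norm_sum_le _ _).trans ?_
        refine (sum_le_card_nsmul T _ 1 fun t _ => χ.norm_le_one _).trans ?_
        simp
      have e2 : ‖∑ z ∈ A, χ (w z)‖ ≤ A.card := by
        refine (norm_sum_le _ _).trans ?_
        refine (sum_le_card_nsmul A _ 1 fun t _ => χ.norm_le_one _).trans ?_
        simp
      have e3 : ‖∑ x ∈ A, ∑ y ∈ A, χ (g x) * χ (h y) * χ (x ^ k + y ^ k)‖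
          ≤ (A.card : ℝ) * A.card := by
        refine (norm_sum_le _ _).trans ?_
        refine (sum_le_card_nsmul A _ (A.card : ℝ) fun x _ => ?_).trans ?_
        · refine (norm_sum_le _ _).trans ?_
          refine (sum_le_card_nsmul A _ 1 fun y _ => ?_).trans ?_
          · rw [← map_mul, ← map_mul]; exact χ.norm_le_one _
          · simp
        · simp
      have : ‖∑ t ∈ T, χ t⁻¹‖ * ‖∑ z ∈ A, χ (w z)‖ *
          ‖∑ x ∈ A, ∑ y ∈ A, χ (g x) * χ (h y) * χ (x ^ k + y ^ k)‖ ≤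
          T.card * A.card * ((A.card : ℝ) * A.card) := by gcongr
      have h0 : 0 ≤ B * (‖∑ t ∈ T, χ t⁻¹‖ * ‖∑ z ∈ A, χ (w z)‖) := by positivity
      nlinarith
    · rw [zero_add, mul_comm]
      gcongr
      exact aux_bilin k hk A χ hχ (fun x => χ (g x)) (fun y => χ (h y))
        (fun _ => χ.norm_le_one _) (fun _ => χ.norm_le_one _)
  have hsum : (p - 1) * C ≤ T.card * A.card ^ 3 + B * ∑ χ : DirichletCharacter ℂ p,
      (‖∑ t ∈ T, χ t⁻¹‖ * ‖∑ z ∈ A, χ (w z)‖) := by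
    have e : (p - 1) * C = ‖(((p - 1) * C : ℝ) : ℂ)‖ := by
      rw [Complex.norm_real, Real.norm_of_nonneg]
      exact mul_nonneg (by linarith) hC0
    rw [e, key]
    refine (norm_sum_le _ _).trans ((sum_le_sum fun χ _ => hterm χ).trans ?_)
    rw [sum_add_distrib, ← mul_sum]
    simp
  have hP1 := aux_parseval T (fun t => t⁻¹) (fun t ht => inv_ne_zero fun e => hT (e ▸ ht)) 1 (by
    intro i _
    have : T.filter (fun j => j⁻¹ = i⁻¹) ⊆ {i} := by
      intro j hj
      simpa using (mem_filter.mp hj).2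
    exact_mod_cast (card_le_card this).trans (by simp))
  have hP2 := aux_parseval A w hw m' (fun i _ => by exact_mod_cast hm' (w i))
  have hCS := Real.sum_mul_le_sqrt_mul_sqrt (univ : Finset (DirichletCharacter ℂ p))
    (fun χ => ‖∑ t ∈ T, χ t⁻¹‖) (fun χ => ‖∑ z ∈ A, χ (w z)‖)
  have hfin : ∑ χ : DirichletCharacter ℂ p, (‖∑ t ∈ T, χ t⁻¹‖ * ‖∑ z ∈ A, χ (w z)‖)
      ≤ (p - 1) * Real.sqrt (T.card * m' * A.card) := by
    refine hCS.trans ?_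
    calc _ ≤ Real.sqrt ((p - 1) * (T.card * 1)) * Real.sqrt ((p - 1) * (A.card * m')) := by
          gcongr
      _ = Real.sqrt ((p - 1) ^ 2 * (T.card * m' * A.card)) := by
          rw [← Real.sqrt_mul (mul_nonneg (by linarith) (by positivity))]
          congr 1; ring
      _ = _ := by
          rw [Real.sqrt_mul (by positivity), Real.sqrt_sq (by linarith)]
  have hpp : (0 : ℝ) < p - 1 := by linarith
  have : (p - 1) * C ≤ (p - 1) * (T.card * A.card ^ 3 / (p - 1)
      + B * Real.sqrt (T.card * m' * A.card)) := by
    rw [mul_add, mul_div_cancel₀ _ hpp.ne']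
    refine hsum.trans ?_
    have := mul_le_mul_of_nonneg_left hfin hB0
    linarith
  exact le_of_mul_le_mul_left this hpp

lemma aux_lower {X : Type*} [DecidableEq X] [Zero X] (A : Finset X) (f : X → X → X) (k : ℕ)
    (hk : 0 < k)
    (hfib : ∑ x ∈ A, ∑ y ∈ A, (A.filter fun y' => f x y' = f x y).card ≤ 2 * k * A.card ^ 2)
    (hz : ∑ x ∈ A, (A.filter fun y => f x y = 0).card ≤ k * A.card) (hA : 4 * k ≤ A.card) :
    A.card ^ 4 ≤ 32 * k * (image₂ f A A).card *
      ∑ x ∈ A, ∑ y ∈ A, if f x y = 0 then 0 else (A.filter fun z => ∃ y' ∈ A, f z y' = f x y).card := by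
  classical
  set P := A ×ˢ A with hP
  set n : X → ℕ := fun s => (A.filter fun z => ∃ y' ∈ A, f z y' = s).card with hn
  set r : X × X → ℕ := fun q => (A.filter fun y' => f q.1 y' = f q.1 q.2).card with hr
  set Q := P.filter (fun q => f q.1 q.2 ≠ 0 ∧ r q ≤ 8 * k) with hQ
  have hcP : P.card = A.card * A.card := card_product _ _
  have hbad1 : (P.filter fun q => f q.1 q.2 = 0).card ≤ k * A.card := by
    refine le_trans (le_of_eq ?_) hz
    rw [card_filter, hP, sum_product]
    simp_rw [card_filter]
  have hbad2 : (8 * k) * (P.filter fun q => 8 * k < r q).card ≤ 2 * k * A.card ^ 2 := by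
    refine le_trans ?_ hfib
    rw [← sum_product' A A (fun x y => (A.filter fun y' => f x y' = f x y).card)]
    refine le_trans ?_ (sum_le_sum_of_subset (filter_subset (fun q => 8 * k < r q) P))
    rw [mul_comm, ← smul_eq_mul]
    exact card_nsmul_le_sum _ _ _ (fun q hq => (mem_filter.mp hq).2.le)
  have hcover : P.card ≤ Q.card + (P.filter fun q => f q.1 q.2 = 0).card
      + (P.filter fun q => 8 * k < r q).card := by
    refine le_trans (card_le_card ?_) ((card_union_le _ _).trans
      (Nat.add_le_add_right (card_union_le Q _) _))
    intro q hq
    simp only [hQ, mem_union, mem_filter, hq, true_and]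
    by_cases h1 : f q.1 q.2 = 0
    · simp [h1]
    · by_cases h2 : r q ≤ 8 * k
      · simp [h1, h2]
      · right; omega
  have hQc : A.card ^ 2 ≤ 2 * Q.card := by
    have h1 : 4 * (P.filter fun q => 8 * k < r q).card ≤ A.card ^ 2 := by
      have : (2 * k) * (4 * (P.filter fun q => 8 * k < r q).card) ≤ (2 * k) * A.card ^ 2 := by
        linarith
      exact Nat.le_of_mul_le_mul_left this (by omega)
    have h2 : 4 * (k * A.card) ≤ A.card ^ 2 := by nlinarith
    nlinarith
  set S := image₂ f A A with hS
  have hmaps : ∀ q ∈ Q, f q.1 q.2 ∈ S := by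
    intro q hq
    have := (mem_filter.mp hq).1
    rw [hP, mem_product] at this
    exact mem_image₂_of_mem this.1 this.2
  set qc : X → ℕ := fun s => (Q.filter fun q => f q.1 q.2 = s).card with hqc
  have hsumq : Q.card = ∑ s ∈ S, qc s := card_eq_sum_card_fiberwise hmaps
  have hCS : Q.card ^ 2 ≤ S.card * ∑ s ∈ S, qc s ^ 2 := by
    rw [hsumq]; exact sq_sum_le_card_mul_sum_sq
  have hqn : ∀ s, qc s ≤ 8 * k * n s := by
    intro s
    refine card_le_mul_card_image_of_maps_to (f := Prod.fst) ?_ _ ?_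
    · intro q hq
      have h1 := mem_filter.mp hq
      have h2 := mem_product.mp (mem_filter.mp h1.1).1
      exact mem_filter.mpr ⟨h2.1, q.2, h2.2, h1.2⟩
    · intro x _
      by_cases hne : ((Q.filter fun q => f q.1 q.2 = s).filter fun q => q.1 = x).Nonempty
      · obtain ⟨q0, hq0⟩ := hne
        simp only [mem_filter, hQ] at hq0
        obtain ⟨⟨⟨_, _, hq0r⟩, hq0s⟩, hq0x⟩ := hq0
        refine le_trans ?_ hq0r
        refine card_le_card_of_injOn Prod.snd ?_ ?_
        · intro q hq
          simp only [coe_filter, mem_filter, Set.mem_ofPred_eq, hQ] at hq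
          obtain ⟨⟨⟨hqP, _, _⟩, hqs⟩, hqx⟩ := hq
          simp only [coe_filter, Set.mem_ofPred_eq]
          refine ⟨(mem_product.mp hqP).2, ?_⟩
          rw [hq0s, hq0x, ← hqx, hqs]
        · intro q hq q' hq' e
          simp only [coe_filter, Set.mem_ofPred_eq] at hq hq'
          exact Prod.ext (hq.2.trans hq'.2.symm) e
      · rw [not_nonempty_iff_eq_empty.mp hne]; simp
  have hsq : ∑ s ∈ S, qc s ^ 2 ≤ 8 * k * ∑ q ∈ Q, n (f q.1 q.2) := by
    rw [← sum_fiberwise_of_maps_to hmaps, mul_sum]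
    apply sum_le_sum
    intro s _
    have : ∑ q ∈ Q with f q.1 q.2 = s, n (f q.1 q.2) = qc s * n s := by
      rw [hqc, ← smul_eq_mul, ← sum_const]
      apply sum_congr rfl
      intro q hq
      rw [(mem_filter.mp hq).2]
    rw [this]
    nlinarith [hqn s]
  have hlast : ∑ q ∈ Q, n (f q.1 q.2) ≤ ∑ x ∈ A, ∑ y ∈ A, if f x y = 0 then 0 else n (f x y) := by
    rw [← sum_product' A A (fun x y => if f x y = 0 then 0 else n (f x y))]
    refine le_trans (le_of_eq ?_) (sum_le_sum_of_subset (filter_subset _ P : Q ⊆ P))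
    apply sum_congr rfl
    intro q hq
    rw [if_neg (mem_filter.mp hq).2.1]
  calc A.card ^ 4 = (A.card ^ 2) ^ 2 := by ring
    _ ≤ (2 * Q.card) ^ 2 := by gcongr
    _ = 4 * Q.card ^ 2 := by ring
    _ ≤ 4 * (S.card * (8 * k * ∑ x ∈ A, ∑ y ∈ A, if f x y = 0 then 0 else n (f x y))) := by
        gcongr
        exact hCS.trans (by gcongr; exact hsq.trans (by gcongr))
    _ = _ := by ring

lemma aux_main {p : ℕ} [Fact p.Prime] (k m' : ℕ) (hk : 0 < k) (A : Finset (ZMod p))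
    (g h w : ZMod p → ZMod p) (hg : ∀ x ∈ A, g x ≠ 0) (hh : ∀ x ∈ A, h x ≠ 0)
    (hw : ∀ x ∈ A, w x ≠ 0) (hm' : ∀ t, (A.filter fun x => w x = t).card ≤ m')
    (hA : 4 * k ≤ A.card) (M : ℝ)
    (hS : ((image₂ (fun x y => g x * h y * (x ^ k + y ^ k)) A A).card : ℝ) ≤ M)
    (hT : ((image₂ (fun x y => w x * (g x * h y * (x ^ k + y ^ k))) A A).card : ℝ) ≤ M) :
    (A.card : ℝ) ^ 4 ≤ 32 * k * M * (M * A.card ^ 3 / (p - 1)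
        + (k + 1) * A.card * Real.sqrt p * Real.sqrt (M * m' * A.card)) := by
  classical
  set f : ZMod p → ZMod p → ZMod p := fun x y => g x * h y * (x ^ k + y ^ k) with hf
  have hp1 : (1 : ℝ) < p := by exact_mod_cast (Fact.out : p.Prime).one_lt
  have hpp : (0 : ℝ) < p - 1 := by linarith
  have hfib : ∑ x ∈ A, ∑ y ∈ A, (A.filter fun y' => f x y' = f x y).card
      ≤ 2 * k * A.card ^ 2 := by
    have e : ∑ x ∈ A, ∑ y ∈ A, (A.filter fun y' => f x y' = f x y).card
        = ∑ y ∈ A, ∑ z ∈ A, (A.filter fun x => f x z = f x y).card := by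
      simp_rw [card_filter]
      rw [sum_comm]
      apply sum_congr rfl
      intro y _
      rw [sum_comm]
    rw [e]
    have h1 : ∀ y ∈ A, ∀ z ∈ A, (A.filter fun x => f x z = f x y).card
        ≤ k + if z ^ k = y ^ k then A.card else 0 := by
      intro y hy z hz
      split_ifs with hyz
      · exact (card_filter_le _ _).trans (Nat.le_add_left _ _)
      · rw [add_zero]
        refine le_trans (card_le_card ?_)
          (aux_powcard k hk A ((h y * y ^ k - h z * z ^ k) / (h z - h y)))
        intro x hx
        obtain ⟨hxA, hx⟩ := mem_filter.mp hx
        refine mem_filter.mpr ⟨hxA, ?_⟩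
        have hx2 : h z * (x ^ k + z ^ k) = h y * (x ^ k + y ^ k) := by
          apply mul_left_cancel₀ (hg x hxA)
          simp only [hf] at hx
          linear_combination hx
        have hne : h z - h y ≠ 0 := by
          intro e
          have e' : h z = h y := sub_eq_zero.mp e
          rw [e'] at hx2
          exact hyz (add_left_cancel (mul_left_cancel₀ (hh y hy) hx2))
        rw [eq_div_iff hne]
        linear_combination hx2
    have h2 : ∀ y ∈ A, ∑ z ∈ A, (A.filter fun x => f x z = f x y).card ≤ 2 * k * A.card := by
      intro y hy
      refine (sum_le_sum (h1 y hy)).trans ?_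
      rw [sum_add_distrib, ← sum_filter, sum_const, sum_const, smul_eq_mul, smul_eq_mul]
      have := aux_powcard k hk A (y ^ k)
      nlinarith
    refine (sum_le_card_nsmul A _ _ h2).trans ?_
    rw [smul_eq_mul]
    exact le_of_eq (by ring)
  have hz : ∑ x ∈ A, (A.filter fun y => f x y = 0).card ≤ k * A.card := by
    have h1 : ∀ x ∈ A, (A.filter fun y => f x y = 0).card ≤ k := by
      intro x hx
      refine le_trans (card_le_card ?_) (aux_powcard k hk A (-x ^ k))
      intro y hy
      obtain ⟨hyA, hy⟩ := mem_filter.mp hy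
      refine mem_filter.mpr ⟨hyA, ?_⟩
      simp only [hf, mul_eq_zero, hg x hx, hh y hyA, false_or] at hy
      linear_combination hy
    refine (sum_le_card_nsmul A _ _ h1).trans ?_
    rw [smul_eq_mul, mul_comm]
  have hlow := aux_lower A f k hk hfib hz hA
  set T := (image₂ (fun x y => w x * f x y) A A) with hTdef
  have hup := aux_upper k m' hk A (T.erase 0) (notMem_erase 0 T) g h w hw hm'
  have hTc : ((T.erase 0).card : ℝ) ≤ M :=
    le_trans (by exact_mod_cast card_le_card (erase_subset 0 T)) hT
  have hcmp : ∑ x ∈ A, ∑ y ∈ A,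
      (if f x y = 0 then 0 else (A.filter fun z => ∃ y' ∈ A, f z y' = f x y).card)
      ≤ ∑ x ∈ A, ∑ y ∈ A, (A.filter fun z => w z * f x y ∈ T.erase 0).card := by
    refine sum_le_sum fun x _ => sum_le_sum fun y _ => ?_
    split_ifs with h0
    · exact Nat.zero_le _
    · apply card_le_card
      intro z hz
      obtain ⟨hzA, y', hy', e⟩ := mem_filter.mp hz
      refine mem_filter.mpr ⟨hzA, mem_erase.mpr ⟨mul_ne_zero (hw z hzA) h0, ?_⟩⟩
      rw [← e]
      exact mem_image₂_of_mem hzA hy'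
  have hM0 : 0 ≤ M := le_trans (Nat.cast_nonneg _) hS
  have hlow' : (A.card : ℝ) ^ 4 ≤ 32 * k * (image₂ f A A).card *
      ∑ x ∈ A, ∑ y ∈ A, ((A.filter fun z => w z * f x y ∈ T.erase 0).card : ℝ) := by
    exact_mod_cast hlow.trans (Nat.mul_le_mul_left _ hcmp)
  refine hlow'.trans ?_
  have hup' := hup.trans (b := _) (c := M * A.card ^ 3 / (p - 1)
        + (k + 1) * A.card * Real.sqrt p * Real.sqrt (M * m' * A.card)) (by gcongr)
  refine mul_le_mul ?_ hup' ?_ (by positivity)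
  · gcongr
  · exact sum_nonneg fun x _ => sum_nonneg fun y _ => Nat.cast_nonneg _

set_option maxHeartbeats 1000000 in
lemma aux_real (k m' : ℕ) (hk : 0 < k) (hm' : 0 < m') (α c₁ c₂ : ℝ) (hα₁ : 1 / 2 < α) (hα₂ : α < 1)
    (hc₁ : 0 < c₁) (hc₁₂ : c₁ < c₂) :
    ∃ Δ : ℝ, 0 < Δ ∧ ∃ κ : ℝ, 0 < κ ∧ ∀ p a M : ℝ, 2 ≤ p → 1 ≤ a → 1 ≤ M →
      c₁ * p ^ α < a → a < c₂ * p ^ α →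
      (4 * k ≤ a → a ^ 4 ≤ 32 * k * M * (M * a ^ 3 / (p - 1)
        + (k + 1) * a * Real.sqrt p * Real.sqrt (M * m' * a))) →
      κ * a ^ (1 + Δ) ≤ M := by
  have hα0 : 0 < α := by linarith
  have hc₂ : 0 < c₂ := hc₁.trans hc₁₂
  have hk' : (0 : ℝ) < k := by exact_mod_cast hk
  have hm'' : (0 : ℝ) < m' := by exact_mod_cast hm'
  have hi1 : 1 < 1 / α := by rw [lt_div_iff₀ hα0]; linarith
  have hi2 : 1 / α < 2 := by rw [div_lt_iff₀ hα0]; linarith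
  set Δ := min ((1 / α - 1) / 2) ((2 - 1 / α) / 3) with hΔ
  have hΔ0 : 0 < Δ := lt_min (by linarith) (by linarith)
  have hΔ1 : Δ ≤ (1 / α - 1) / 2 := min_le_left _ _
  have hΔ2 : Δ ≤ (2 - 1 / α) / 3 := min_le_right _ _
  set L : ℝ := (64 * k * (k + 1)) ^ 2 * m' with hL
  have hL0 : 0 < L := by positivity
  set E1 : ℝ := (1 / c₂) ^ (1 / α) / (128 * k) with hE1
  set E2 : ℝ := c₁ ^ (1 / α) / L with hE2
  set E3 : ℝ := 1 / (4 * k : ℝ) ^ (1 + Δ) with hE3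
  have hE1' : 0 < E1 := by positivity
  have hE2' : 0 < E2 := by positivity
  have hE3' : 0 < E3 := by positivity
  set κ := min (min 1 E1) (min E2 E3) with hκ
  have hκ0 : 0 < κ := by simp only [hκ, lt_min_iff]; exact ⟨⟨one_pos, hE1'⟩, hE2', hE3'⟩
  have k0 : κ ≤ 1 := (min_le_left _ _).trans (min_le_left _ _)
  have k1 : κ ≤ E1 := (min_le_left _ _).trans (min_le_right _ _)
  have k2 : κ ≤ E2 := (min_le_right _ _).trans (min_le_left _ _)
  have k3 : κ ≤ E3 := (min_le_right _ _).trans (min_le_right _ _)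
  refine ⟨Δ, hΔ0, κ, hκ0, ?_⟩
  intro p a M hp ha hM h1 h2 hmain
  have ha0 : 0 < a := by linarith
  have hp0 : 0 < p := by linarith
  have hM0 : 0 < M := by linarith
  set X := a ^ (1 + Δ) with hX
  have hX0 : 0 < X := by positivity
  have hpow : ∀ c : ℝ, 0 < c → (p ^ α) ^ (1 / α) = p := by
    intro c _
    rw [← Real.rpow_mul hp0.le, mul_one_div_cancel hα0.ne', Real.rpow_one]
  have hpa := hpow 1 one_pos
  by_cases hka : 4 * (k : ℝ) ≤ a
  swap
  · have : X ≤ (4 * k : ℝ) ^ (1 + Δ) := by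
      apply Real.rpow_le_rpow ha0.le (by linarith) (by linarith)
    calc κ * X ≤ E3 * (4 * k : ℝ) ^ (1 + Δ) := by gcongr
      _ = 1 := by rw [hE3]; field_simp
      _ ≤ M := hM
  have hm := hmain hka
  have hsplit : a ^ 4 / 2 ≤ 32 * k * M * (M * a ^ 3 / (p - 1)) ∨
      a ^ 4 / 2 ≤ 32 * k * M * ((k + 1) * a * Real.sqrt p * Real.sqrt (M * m' * a)) := by
    by_contra hcon
    push Not at hcon
    rw [mul_add] at hm
    linarith [hcon.1, hcon.2]
  rcases hsplit with hs | hs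
  · have hp1 : 0 < p - 1 := by linarith
    have q1 : a * p ≤ 128 * k * M ^ 2 := by
      have e : 32 * k * M * (M * a ^ 3 / (p - 1)) = 32 * k * M ^ 2 * a ^ 3 / (p - 1) := by
        field_simp
      rw [e, le_div_iff₀ hp1] at hs
      have : a ^ 3 * (a * (p - 1)) ≤ a ^ 3 * (64 * k * M ^ 2) := by linarith
      have := le_of_mul_le_mul_left this (by positivity)
      nlinarith
    have q2 : a ^ (1 / α) * (1 / c₂) ^ (1 / α) ≤ p := by
      rw [← Real.mul_rpow ha0.le (by positivity)]
      conv_rhs => rw [← hpa]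
      apply Real.rpow_le_rpow (by positivity) _ (by positivity)
      rw [mul_one_div, div_le_iff₀ hc₂]; linarith
    have q3 : X ^ 2 ≤ a * a ^ (1 / α) := by
      rw [hX, ← Real.rpow_natCast, ← Real.rpow_mul ha0.le]
      nth_rewrite 2 [← Real.rpow_one a]
      rw [← Real.rpow_add ha0]
      apply Real.rpow_le_rpow_of_exponent_le ha
      push_cast; linarith
    have q4 : E1 * X ^ 2 ≤ M ^ 2 := by
      rw [hE1, div_mul_eq_mul_div, div_le_iff₀ (by positivity)]
      calc (1 / c₂) ^ (1 / α) * X ^ 2 ≤ (1 / c₂) ^ (1 / α) * (a * a ^ (1 / α)) := by gcongr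
        _ = a * (a ^ (1 / α) * (1 / c₂) ^ (1 / α)) := by ring
        _ ≤ a * p := by gcongr
        _ ≤ _ := by linarith
    have q5 : (κ * X) ^ 2 ≤ M ^ 2 := by
      refine le_trans ?_ q4
      rw [mul_pow]
      gcongr
      nlinarith
    exact (pow_le_pow_iff_left₀ (by positivity) hM0.le (by norm_num)).mp q5
  · have q1 : a ^ 5 ≤ L * p * M ^ 3 := by
      have e := pow_le_pow_left₀ (by positivity) hs 2
      have e2 : (32 * k * M * ((k + 1) * a * Real.sqrt p * Real.sqrt (M * m' * a))) ^ 2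
          = (32 * k * (k + 1)) ^ 2 * m' * M ^ 3 * p * a ^ 3 := by
        have s1 : Real.sqrt p ^ 2 = p := Real.sq_sqrt hp0.le
        have s2 : Real.sqrt (M * m' * a) ^ 2 = M * m' * a := Real.sq_sqrt (by positivity)
        calc _ = (32 * k * M * (k + 1) * a) ^ 2 * Real.sqrt p ^ 2 * Real.sqrt (M * m' * a) ^ 2 := by
              ring
          _ = _ := by rw [s1, s2]; ring
      rw [e2] at e
      have : a ^ 3 * a ^ 5 ≤ a ^ 3 * (L * p * M ^ 3) := by
        rw [hL]; linarith
      exact le_of_mul_le_mul_left this (by positivity)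
    have q2 : p * c₁ ^ (1 / α) ≤ a ^ (1 / α) := by
      calc p * c₁ ^ (1 / α) = (p ^ α) ^ (1 / α) * c₁ ^ (1 / α) := by rw [hpa]
        _ ≤ _ := ?_
      rw [← Real.mul_rpow (by positivity) hc₁.le]
      apply Real.rpow_le_rpow (by positivity) _ (by positivity)
      linarith
    have q3 : X ^ 3 * a ^ (1 / α) ≤ a ^ 5 := by
      rw [hX, ← Real.rpow_natCast, ← Real.rpow_natCast, ← Real.rpow_mul ha0.le,
        ← Real.rpow_add ha0]
      apply Real.rpow_le_rpow_of_exponent_le ha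
      push_cast; linarith
    have q4 : E2 * X ^ 3 ≤ M ^ 3 := by
      rw [hE2, div_mul_eq_mul_div, div_le_iff₀ hL0]
      have : p * (c₁ ^ (1 / α) * X ^ 3) ≤ p * (M ^ 3 * L) := by
        calc p * (c₁ ^ (1 / α) * X ^ 3) = X ^ 3 * (p * c₁ ^ (1 / α)) := by ring
          _ ≤ X ^ 3 * a ^ (1 / α) := by gcongr
          _ ≤ a ^ 5 := q3
          _ ≤ _ := by linarith
      exact le_of_mul_le_mul_left this hp0
    have q5 : (κ * X) ^ 3 ≤ M ^ 3 := by
      refine le_trans ?_ q4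
      rw [mul_pow]
      gcongr
      calc κ ^ 3 ≤ κ ^ 1 := pow_le_pow_of_le_one hκ0.le k0 (by norm_num)
        _ ≤ E2 := by rw [pow_one]; exact k2
    exact (pow_le_pow_iff_left₀ (by positivity) hM0.le (by norm_num)).mp q5

end AuxSection

/-- Theorem 5: for fixed `k, m, m'`, `1/2 < α < 1` and `0 < c₁ < c₂` there are
`Δ > 0` and `κ > 0` such that for `f(x,y) = g(x)h(y)(x^k+y^k)` (with `g, h` as in
Theorem 3) and any `w` with `μ(w) ≤ m'`, every `A ⊆ G` with `c₁·p^α < |A| < c₂·p^α`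
satisfies `max(|f(A,A)|, |P_w(f)(A,A)|) ≥ κ·|A|^{1+Δ}`, where
`P_w(f)(x,y) = w(x)·f(x,y)`. -/
theorem stmt_13 (k m m' : ℕ) (hk : 0 < k) (hm : 0 < m) (hm' : 0 < m')
    (α c₁ c₂ : ℝ) (hα₁ : 1 / 2 < α) (hα₂ : α < 1) (hc₁ : 0 < c₁) (hc₁₂ : c₁ < c₂) :
    ∃ Δ : ℝ, 0 < Δ ∧ ∃ κ : ℝ, 0 < κ ∧ ∀ (p : ℕ), p.Prime →
    ∀ G : Finset (ZMod p), (0 : ZMod p) ∉ G → (1 : ZMod p) ∈ G →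
      (∀ x ∈ G, ∀ y ∈ G, x * y ∈ G) → (∀ x ∈ G, x⁻¹ ∈ G) →
    ∀ g h : ZMod p → ZMod p, (∀ x ∈ G, g x ≠ 0) → (∀ x ∈ G, h x ≠ 0) →
      (∀ z ∈ G, (G.image fun x => g (x * z) * (g x)⁻¹).card ≤ m) →
      (∀ z ∈ G, (G.image fun x => h (x * z) * (h x)⁻¹).card ≤ m) →
      (∀ u ∈ G, ∀ t : ZMod p, (G.filter fun x => g x * h (u * x) * x = t).card ≤ m) →
    ∀ w : ZMod p → ZMod p, (∀ x ∈ G, w x ≠ 0) →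
      (∀ t : ZMod p, (G.filter fun x => w x = t).card ≤ m') →
    ∀ A : Finset (ZMod p), A ⊆ G →
      c₁ * (p : ℝ) ^ α < (A.card : ℝ) → (A.card : ℝ) < c₂ * (p : ℝ) ^ α →
      max ((Finset.image₂ (fun x y => g x * h y * (x ^ k + y ^ k)) A A).card : ℝ)
          ((Finset.image₂ (fun x y => w x * (g x * h y * (x ^ k + y ^ k))) A A).card : ℝ) ≥
        κ * (A.card : ℝ) ^ ((1 : ℝ) + Δ) := by
  obtain ⟨Δ, hΔ, κ, hκ, H⟩ := aux_real k m' hk hm' α c₁ c₂ hα₁ hα₂ hc₁ hc₁₂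
  refine ⟨Δ, hΔ, κ, hκ, ?_⟩
  intro p hp G _ _ _ _ g h hg hh _ _ _ w hw hwm A hAG hA1 hA2
  haveI : Fact p.Prime := ⟨hp⟩
  have hp2 : (2 : ℝ) ≤ p := by exact_mod_cast hp.two_le
  have hApos : 0 < A.card := by
    have : (0 : ℝ) < A.card := lt_trans (by positivity) hA1
    exact_mod_cast this
  have hAne : A.Nonempty := Finset.card_pos.mp hApos
  refine H p A.card _ hp2 (by exact_mod_cast hApos) ?_ hA1 hA2 ?_
  · refine le_max_of_le_left ?_
    have := (hAne.image₂ (f := fun x y => g x * h y * (x ^ k + y ^ k)) hAne).card_pos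
    exact_mod_cast this
  · intro hka
    refine aux_main k m' hk A g h w (fun x hx => hg x (hAG hx)) (fun x hx => hh x (hAG hx))
      (fun x hx => hw x (hAG hx)) ?_ (by exact_mod_cast hka) _ (le_max_left _ _) (le_max_right _ _)
    intro t
    exact (Finset.card_le_card (Finset.filter_subset_filter _ hAG)).trans (hwm t)
end

section
/- There exists an absolute constant κ > 0 with the following property. Let p be a prime and A ⊆ 𝔽_p^* a set with |A| ≤ p^{1/2 − 1/500}. Define f(x,y) = xy(x + y). Then max( |f(A,A)|, |A·A| ) ≥ κ · |A|^{1 + 1/800}. -/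
open Pointwise

/-- Cauchy–Schwarz for the number of collisions of a map. -/
lemma collision_bound {α β : Type*} [DecidableEq α] [DecidableEq β] (P : Finset α) (f : α → β)
    (T : Finset β) (h : ∀ q ∈ P, f q ∈ T) :
    P.card ^ 2 ≤ T.card * ((P ×ˢ P).filter (fun q => f q.1 = f q.2)).card := by
  have h1 : P.card = ∑ t ∈ T, (P.filter (fun q => f q = t)).card :=
    Finset.card_eq_sum_card_fiberwise (fun q hq => h q hq)
  have h2 : ((P ×ˢ P).filter (fun q => f q.1 = f q.2)).card
      = ∑ t ∈ T, ((P.filter (fun q => f q = t)).card) ^ 2 := by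
    rw [Finset.card_eq_sum_card_fiberwise (f := fun q : α × α => f q.1) (t := T)]
    · refine Finset.sum_congr rfl fun t _ => ?_
      rw [sq, ← Finset.card_product]
      congr 1
      ext ⟨a, b⟩
      simp only [Finset.mem_filter, Finset.mem_product]
      constructor
      · rintro ⟨⟨⟨ha, hb⟩, hab⟩, hat⟩
        exact ⟨⟨ha, hat⟩, hb, hab ▸ hat⟩
      · rintro ⟨⟨ha, hat⟩, hb, hbt⟩
        exact ⟨⟨⟨ha, hb⟩, hat.trans hbt.symm⟩, hat⟩
    · intro q hq
      have := (Finset.mem_filter.1 hq).1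
      exact h _ (Finset.mem_product.1 this).1
  rw [h2]
  conv_lhs => rw [h1]
  have := sq_sum_le_card_mul_sum_sq (s := T) (f := fun t => (P.filter (fun q => f q = t)).card)
  simpa using this

/-- Differences with many representations are few. -/
lemma popular_bound {F : Type*} [DecidableEq F] [Sub F] (D S : Finset F) (τ : ℝ)
    (h : ∀ d ∈ D, τ ≤ (((S ×ˢ S).filter (fun q => q.1 - q.2 = d)).card : ℝ)) :
    (D.card : ℝ) * τ ≤ (S.card : ℝ) ^ 2 := by
  have h1 : ∑ d ∈ D, ((S ×ˢ S).filter (fun q => q.1 - q.2 = d)).card ≤ (S ×ˢ S).card := by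
    rw [← Finset.card_biUnion]
    · apply Finset.card_le_card
      intro q hq
      simp only [Finset.mem_biUnion, Finset.mem_filter] at hq
      obtain ⟨d, _, hq, _⟩ := hq
      exact hq
    · intro x _ y _ hxy
      rw [Function.onFun, Finset.disjoint_left]
      intro q h1 h2
      exact hxy ((Finset.mem_filter.1 h1).2.symm.trans (Finset.mem_filter.1 h2).2)
  have h2 := Finset.card_nsmul_le_sum D _ τ h
  rw [Finset.card_product] at h1
  have h3 : ((∑ d ∈ D, ((S ×ˢ S).filter (fun q => q.1 - q.2 = d)).card : ℕ) : ℝ)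
      ≤ ((S.card * S.card : ℕ) : ℝ) := by exact_mod_cast h1
  push_cast at h3
  rw [nsmul_eq_mul] at h2
  nlinarith

/-- Multiplicative Pluennecke-Ruzsa inequality for sets of nonzero elements of a field. -/
lemma mul_plunnecke {F : Type*} [Field F] [DecidableEq F] (A : Finset F) (h0 : ∀ a ∈ A, a ≠ 0)
    (hA : A.Nonempty) (K : ℝ) (hK : ((A * A).card : ℝ) ≤ K * A.card) (m n : ℕ) :
    ((A ^ m / A ^ n).card : ℝ) ≤ K ^ (m + n) * A.card := by
  classical
  let B : Finset Fˣ := A.attach.image (fun a => Units.mk0 a.1 (h0 a.1 a.2))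
  have hinj : Function.Injective (Units.coeHom F) := Units.val_injective
  have hBA : B.image (Units.coeHom F) = A := by
    ext x
    simp only [B, Finset.mem_image, Finset.mem_attach, true_and]
    constructor
    · rintro ⟨u, ⟨a, rfl⟩, rfl⟩
      simp
    · intro hx
      exact ⟨Units.mk0 x (h0 x hx), ⟨⟨x, hx⟩, rfl⟩, rfl⟩
  have hB : B.Nonempty := by
    rw [← hBA] at hA
    exact Finset.image_nonempty.1 hA
  have hc : B.card = A.card := by rw [← hBA, Finset.card_image_of_injective _ hinj]
  have hm : (B * B).card = (A * A).card := by
    rw [← hBA, ← Finset.image_mul, Finset.card_image_of_injective _ hinj]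
  have hd : (B ^ m / B ^ n).card = (A ^ m / A ^ n).card := by
    rw [← hBA, ← Finset.image_pow, ← Finset.image_pow, ← Finset.image_div,
      Finset.card_image_of_injective _ hinj]
  have h := Finset.pluennecke_ruzsa_inequality_pow_div_pow_mul hB B m n
  rw [hc, hm, hd] at h
  have h' : ((A ^ m / A ^ n).card : ℝ) ≤ (((A * A).card : ℝ) / A.card) ^ (m + n) * A.card := by
    have h3 := (NNRat.cast_le (K := ℝ)).2 h
    push_cast at h3
    exact h3
  refine h'.trans ?_
  have hpos : (0 : ℝ) < A.card := by exact_mod_cast hA.card_pos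
  gcongr
  rw [div_le_iff₀ hpos]
  exact hK

lemma card_dilate {F : Type*} [Field F] [DecidableEq F] (c : F) (hc : c ≠ 0) (B : Finset F) :
    (B.image (fun x => c * x)).card = B.card :=
  Finset.card_image_of_injective _ (mul_right_injective₀ hc)

/-- The pivot lemma. -/
lemma pivot {p : ℕ} [Fact p.Prime] (B : Finset (ZMod p)) (h2 : 2 ≤ B.card)
    (hp : B.card ^ 2 ≤ p) :
    ∃ a ∈ B, ∃ b ∈ B, ∃ c ∈ B, ∃ d ∈ B, c ≠ d ∧ ∃ e : ZMod p, (e = 0 ∨ e = 1) ∧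
      B.card ^ 2 ≤ 2 * ((B ×ˢ B).image
        (fun q => q.1 + ((a - b) / (c - d) + e) * q.2)).card := by
  classical
  obtain ⟨u, hu, v, hv, huv⟩ := Finset.one_lt_card.1 h2
  let R : ZMod p → Prop := fun r => ∃ a ∈ B, ∃ b ∈ B, ∃ c ∈ B, ∃ d ∈ B, c ≠ d ∧
    r = (a - b) / (c - d)
  by_cases hR : ∀ r, R r → R (r + 1)
  · have hall : ∀ r, R r := by
      have hn : ∀ n : ℕ, R (n : ZMod p) := by
        intro n
        induction n with
        | zero => exact ⟨u, hu, u, hu, u, hu, v, hv, huv, by simp⟩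
        | succ k ih => push_cast; exact hR _ ih
      intro r
      have := hn r.val
      rwa [ZMod.natCast_zmod_val] at this
    let E : ZMod p → ℕ := fun ξ => (((B ×ˢ B) ×ˢ (B ×ˢ B)).filter
      (fun q => q.1.1 + ξ * q.1.2 = q.2.1 + ξ * q.2.2)).card
    have hsum : ∑ ξ : ZMod p, E ξ ≤ ∑ ξ : ZMod p, 2 * B.card ^ 2 := by
      have hE : ∑ ξ : ZMod p, E ξ = ∑ q ∈ (B ×ˢ B) ×ˢ (B ×ˢ B),
          ((Finset.univ : Finset (ZMod p)).filter
            (fun ξ => q.1.1 + ξ * q.1.2 = q.2.1 + ξ * q.2.2)).card := by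
        simp only [E, Finset.card_filter]
        rw [Finset.sum_comm]
      have hq : ∀ q ∈ (B ×ˢ B) ×ˢ (B ×ˢ B), ((Finset.univ : Finset (ZMod p)).filter
            (fun ξ => q.1.1 + ξ * q.1.2 = q.2.1 + ξ * q.2.2)).card
            ≤ (if q.1 = q.2 then p else 0) + 1 := by
        rintro ⟨⟨x, y⟩, ⟨x', y'⟩⟩ _
        by_cases hqq : ((x, y) : ZMod p × ZMod p) = (x', y')
        · simp only [hqq, if_true]
          refine (Finset.card_le_univ _).trans ?_
          rw [ZMod.card]; omega
        · simp only [hqq, if_false, zero_add]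
          rw [Finset.card_le_one]
          intro s hs t ht
          simp only [Finset.mem_filter, Finset.mem_univ, true_and] at hs ht
          have h3 : (s - t) * (y - y') = 0 := by linear_combination hs - ht
          rcases mul_eq_zero.1 h3 with h | h
          · exact sub_eq_zero.1 h
          · exfalso
            apply hqq
            have hy : y = y' := sub_eq_zero.1 h
            subst hy
            have : x = x' := by simpa using hs
            rw [this]
      rw [hE]
      refine (Finset.sum_le_sum hq).trans ?_
      rw [Finset.sum_add_distrib, ← Finset.sum_filter, Finset.sum_const, Finset.sum_const,
        Finset.sum_const]
      have hdiag : ((((B ×ˢ B) ×ˢ (B ×ˢ B)).filter (fun q => q.1 = q.2)).card) ≤ B.card ^ 2 := by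
        rw [sq, ← Finset.card_product]
        apply Finset.card_le_card_of_injOn (fun q => q.1)
        · intro q hq
          exact (Finset.mem_product.1 (Finset.mem_filter.1 hq).1).1
        · rintro ⟨q1, q2⟩ hq ⟨r1, r2⟩ hr h
          have e1 : q1 = q2 := (Finset.mem_filter.1 hq).2
          have e2 : r1 = r2 := (Finset.mem_filter.1 hr).2
          have e3 : q1 = r1 := h
          rw [← e1, ← e2, e3]
      simp only [smul_eq_mul, Finset.card_product, Finset.card_univ, ZMod.card]
      have : B.card * B.card * (B.card * B.card) ≤ p * B.card ^ 2 := by nlinarith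
      nlinarith
    obtain ⟨ξ, _, hξ⟩ := Finset.exists_le_of_sum_le Finset.univ_nonempty hsum
    obtain ⟨a, ha, b, hb, c, hc, d, hd, hcd, hr⟩ := hall ξ
    refine ⟨a, ha, b, hb, c, hc, d, hd, hcd, 0, Or.inl rfl, ?_⟩
    rw [add_zero, ← hr]
    have h3 := collision_bound (B ×ˢ B) (fun q => q.1 + ξ * q.2) _
      (fun q hq => Finset.mem_image_of_mem _ hq)
    rw [Finset.card_product] at h3
    have hpos : 0 < B.card ^ 2 := by positivity
    have h4 := h3.trans (Nat.mul_le_mul_left _ hξ)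
    have h5 : B.card ^ 2 * B.card ^ 2 ≤
      (2 * ((B ×ˢ B).image (fun q => q.1 + ξ * q.2)).card) * B.card ^ 2 := by
      nlinarith
    exact Nat.le_of_mul_le_mul_right h5 hpos
  · push Not at hR
    obtain ⟨r, ⟨a, ha, b, hb, c, hc, d, hd, hcd, hr⟩, hr1⟩ := hR
    refine ⟨a, ha, b, hb, c, hc, d, hd, hcd, 1, Or.inr rfl, ?_⟩
    rw [← hr, Finset.card_image_of_injOn, Finset.card_product]
    · nlinarith
    · rintro ⟨x, y⟩ hq ⟨x', y'⟩ hq' h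
      simp only [Finset.coe_product, Set.mem_prod, Finset.mem_coe] at hq hq'
      have h' : x + (r + 1) * y = x' + (r + 1) * y' := h
      by_cases hy : y = y'
      · subst hy
        have : x = x' := by simpa using h'
        rw [this]
      · exfalso
        apply hr1
        refine ⟨x, hq.1, x', hq'.1, y', hq'.2, y, hq.2, Ne.symm hy, ?_⟩
        rw [eq_div_iff (sub_ne_zero.2 (Ne.symm hy))]
        linear_combination -h'

set_option maxHeartbeats 1000000 in
/-- Sum-product estimate: a set with few products and few differences is small. -/
lemma sum_product {p : ℕ} [Fact p.Prime] (B : Finset (ZMod p)) (h0 : ∀ b ∈ B, b ≠ 0)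
    (hne : B.Nonempty) (hp : B.card ^ 2 ≤ p) (L M : ℝ)
    (hL : ((B * B).card : ℝ) ≤ L * B.card) (hM : ((B - B).card : ℝ) ≤ M * B.card) :
    (B.card : ℝ) ≤ 8 * L ^ 2 * (8 * L * M ^ 2) ^ 6 := by
  classical
  have hn : (0 : ℝ) < B.card := by exact_mod_cast hne.card_pos
  obtain ⟨z, hz⟩ := hne
  have hL1 : 1 ≤ L := by
    have h : B.card ≤ (B * B).card :=
      Finset.card_le_card_mul_left_of_injective hz (mul_right_injective₀ (h0 z hz))
    have h' : (B.card : ℝ) ≤ (B * B).card := by exact_mod_cast h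
    by_contra hlt
    push Not at hlt
    nlinarith
  have hM1 : 1 ≤ M := by
    have h : B.card ≤ (B - B).card := Finset.card_le_card_sub_right ⟨z, hz⟩
    have h' : (B.card : ℝ) ≤ (B - B).card := by exact_mod_cast h
    by_contra hlt
    push Not at hlt
    nlinarith
  -- `I a b` is the number of solutions of `a x = b y`
  obtain ⟨I, hI⟩ : ∃ I : ZMod p → ZMod p → ℕ, ∀ a b,
      I a b = ((B ×ˢ B).filter (fun q => a * q.1 = b * q.2)).card := ⟨_, fun _ _ => rfl⟩
  have hen : (B.card : ℝ) ^ 4 ≤ (L * B.card) * ∑ b ∈ B, ∑ a ∈ B, (I a b : ℝ) := by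
    have h := collision_bound (B ×ˢ B) (fun q => q.1 * q.2) (B * B)
      (fun q hq => Finset.mul_mem_mul (Finset.mem_product.1 hq).1 (Finset.mem_product.1 hq).2)
    have hs : (((B ×ˢ B) ×ˢ (B ×ˢ B)).filter
        (fun q => q.1.1 * q.1.2 = q.2.1 * q.2.2)).card = ∑ b ∈ B, ∑ a ∈ B, I a b := by
      simp only [hI, Finset.card_filter, Finset.sum_product]
      conv_rhs => rw [Finset.sum_comm]
      refine Finset.sum_congr rfl fun a _ => ?_
      rw [Finset.sum_comm]
    rw [hs, Finset.card_product] at h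
    have h' : (((B.card * B.card) ^ 2 : ℕ) : ℝ) ≤
      (((B * B).card * ∑ b ∈ B, ∑ a ∈ B, I a b : ℕ) : ℝ) := by exact_mod_cast h
    push_cast at h'
    calc (B.card : ℝ) ^ 4 = ((B.card : ℝ) * B.card) ^ 2 := by ring
      _ ≤ _ := h'
      _ ≤ _ := mul_le_mul_of_nonneg_right hL
        (Finset.sum_nonneg fun _ _ => Finset.sum_nonneg fun _ _ => Nat.cast_nonneg _)
  obtain ⟨b₀, hb₀, hb⟩ : ∃ b ∈ B, (B.card : ℝ) ^ 2 / L ≤ ∑ a ∈ B, (I a b : ℝ) := by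
    apply Finset.exists_le_of_sum_le ⟨z, hz⟩
    rw [Finset.sum_const, nsmul_eq_mul, ← mul_div_assoc, div_le_iff₀ (by positivity)]
    apply le_of_mul_le_mul_left _ hn
    linarith
  have hIle : ∀ a ∈ B, (I a b₀ : ℝ) ≤ B.card := by
    intro a ha
    have : I a b₀ ≤ B.card := by
      rw [hI]
      apply Finset.card_le_card_of_injOn (fun q => q.1)
      · intro q hq
        exact (Finset.mem_product.1 (Finset.mem_filter.1 hq).1).1
      · rintro ⟨x, y⟩ hq ⟨x', y'⟩ hq' h
        have e : x = x' := h
        subst e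
        have e1 : a * x = b₀ * y := (Finset.mem_filter.1 hq).2
        have e2 : a * x = b₀ * y' := (Finset.mem_filter.1 hq').2
        have : y = y' := mul_right_injective₀ (h0 _ hb₀) (e1.symm.trans e2)
        rw [this]
    exact_mod_cast this
  let B₁ := B.filter (fun a => (B.card : ℝ) / (2 * L) ≤ I a b₀)
  have hB₁B : B₁ ⊆ B := Finset.filter_subset _ _
  have hB₁ : (B.card : ℝ) ≤ 2 * L * B₁.card := by
    have hs : ∑ a ∈ B, (I a b₀ : ℝ) ≤ ∑ a ∈ B, ((B.card : ℝ) / (2 * L) +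
        if (B.card : ℝ) / (2 * L) ≤ I a b₀ then (B.card : ℝ) else 0) := by
      apply Finset.sum_le_sum
      intro a ha
      have h1 : 0 ≤ (B.card : ℝ) / (2 * L) := by positivity
      split_ifs with h
      · linarith [hIle a ha]
      · push Not at h
        linarith
    rw [Finset.sum_add_distrib, ← Finset.sum_filter, Finset.sum_const, Finset.sum_const,
      nsmul_eq_mul, nsmul_eq_mul] at hs
    change _ ≤ _ + (B₁.card : ℝ) * _ at hs
    have h3 := hb.trans hs
    rw [div_le_iff₀ (by positivity)] at h3
    have h4 : ((B.card : ℝ) * (B.card / (2 * L)) + B₁.card * B.card) * L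
      = B.card * (B.card / 2 + B₁.card * L) := by
      field_simp
    rw [h4, sq] at h3
    have := le_of_mul_le_mul_left h3 hn
    linarith
  have hbig : (1 : ℝ) ≤ (8 * L * M ^ 2) := by nlinarith [one_le_pow₀ hM1 (n := 2)]
  by_cases hsmall : B₁.card < 2
  · have h1 : (B₁.card : ℝ) ≤ 1 := by exact_mod_cast Nat.lt_succ_iff.1 hsmall
    have h2 : (B.card : ℝ) ≤ 2 * L := by nlinarith
    have h3 := one_le_pow₀ hbig (n := 6)
    nlinarith [sq_nonneg L]
  push Not at hsmall
  obtain ⟨a, ha, b, hb', c, hc, d, hd, hcd, e, he, hcard⟩ := pivot B₁ hsmall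
    ((Nat.pow_le_pow_left (Finset.card_le_card hB₁B) 2).trans hp)
  -- the union of dilates
  let N : Finset (ZMod p) := {a, b, c, d}
  have hN : ∀ x ∈ N, x ∈ B₁ := by
    intro x hx
    simp only [N, Finset.mem_insert, Finset.mem_singleton] at hx
    rcases hx with rfl | rfl | rfl | rfl <;> assumption
  let X := N.biUnion (fun t => B.image (fun x => t * x))
  let Z := B.image (fun x => b₀ * x)
  have hZ : Z.card = B.card := card_dilate _ (h0 _ hb₀) _
  have hdiff : ∀ t : ZMod p, t ≠ 0 →
      (B.image (fun x => t * x) - B.image (fun x => t * x)).card ≤ (B - B).card := by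
    intro t ht
    rw [← card_dilate t ht (B - B)]
    apply Finset.card_le_card
    intro s hs
    obtain ⟨x, hx, y, hy, rfl⟩ := Finset.mem_sub.1 hs
    obtain ⟨x', hx', rfl⟩ := Finset.mem_image.1 hx
    obtain ⟨y', hy', rfl⟩ := Finset.mem_image.1 hy
    exact Finset.mem_image.2 ⟨x' - y', Finset.sub_mem_sub hx' hy', by ring⟩
  have hone : ∀ t ∈ N, ((Z - B.image (fun x => t * x)).card : ℝ) ≤ 2 * L * M ^ 2 * B.card := by
    intro t ht
    have htB := Finset.mem_filter.1 (hN t ht)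
    let J := ((B ×ˢ B).filter (fun q => t * q.1 = b₀ * q.2)).image (fun q => t * q.1)
    have hJ : J.card = I t b₀ := by
      rw [hI]
      apply Finset.card_image_of_injOn
      rintro ⟨x, y⟩ hq ⟨x', y'⟩ hq' h
      have e : t * x = t * x' := h
      have e1 : t * x = b₀ * y := (Finset.mem_filter.1 hq).2
      have e2 : t * x' = b₀ * y' := (Finset.mem_filter.1 hq').2
      have h1 : x = x' := mul_right_injective₀ (h0 _ htB.1) e
      have h2 : y = y' := mul_right_injective₀ (h0 _ hb₀) (e1.symm.trans (e.trans e2))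
      rw [h1, h2]
    have hJ1 : J ⊆ Z := by
      intro s hs
      obtain ⟨q, hq, rfl⟩ := Finset.mem_image.1 hs
      obtain ⟨hq, hqe⟩ := Finset.mem_filter.1 hq
      exact Finset.mem_image.2 ⟨q.2, (Finset.mem_product.1 hq).2, hqe.symm⟩
    have hJ2 : J ⊆ B.image (fun x => t * x) := by
      intro s hs
      obtain ⟨q, hq, rfl⟩ := Finset.mem_image.1 hs
      obtain ⟨hq, hqe⟩ := Finset.mem_filter.1 hq
      exact Finset.mem_image.2 ⟨q.1, (Finset.mem_product.1 hq).1, rfl⟩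
    have h1 := Finset.ruzsa_triangle_inequality_sub_sub_sub Z J (B.image (fun x => t * x))
    have h2 : (Z - J).card ≤ (B - B).card :=
      (Finset.card_le_card (Finset.sub_subset_sub_left hJ1)).trans (hdiff _ (h0 _ hb₀))
    have h3 : (B.image (fun x => t * x) - J).card ≤ (B - B).card :=
      (Finset.card_le_card (Finset.sub_subset_sub_left hJ2)).trans (hdiff _ (h0 _ htB.1))
    have h4 : (((Z - B.image (fun x => t * x)).card * J.card : ℕ) : ℝ) ≤
        (((B - B).card * (B - B).card : ℕ) : ℝ) := by
      exact_mod_cast h1.trans (Nat.mul_le_mul h2 h3)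
    push_cast at h4
    have h5 : ((B - B).card : ℝ) * (B - B).card ≤ (M * B.card) * (M * B.card) := by
      gcongr
    have h6 : (B.card : ℝ) / (2 * L) ≤ J.card := by rw [hJ]; exact htB.2
    have h7 : ((Z - B.image (fun x => t * x)).card : ℝ) * (B.card / (2 * L)) ≤
        (M * B.card) * (M * B.card) :=
      (mul_le_mul_of_nonneg_left h6 (by positivity)).trans (h4.trans h5)
    rw [← mul_div_assoc, div_le_iff₀ (by positivity)] at h7
    apply le_of_mul_le_mul_right _ hn
    linarith
  have hX : ((Z - X).card : ℝ) ≤ 8 * L * M ^ 2 * B.card := by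
    have h1 : Z - X ⊆ N.biUnion (fun t => Z - B.image (fun x => t * x)) := by
      intro s hs
      obtain ⟨x, hx, y, hy, rfl⟩ := Finset.mem_sub.1 hs
      obtain ⟨t, ht, hy⟩ := Finset.mem_biUnion.1 hy
      exact Finset.mem_biUnion.2 ⟨t, ht, Finset.sub_mem_sub hx hy⟩
    have h2 := (Finset.card_le_card h1).trans Finset.card_biUnion_le
    have h3 : ((Z - X).card : ℝ) ≤ ∑ t ∈ N, ((Z - B.image (fun x => t * x)).card : ℝ) := by
      exact_mod_cast h2
    have h4 := Finset.sum_le_card_nsmul N _ _ hone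
    have h5 : N.card ≤ 4 := Finset.card_le_four
    have h6 : (N.card : ℝ) ≤ 4 := by exact_mod_cast h5
    rw [nsmul_eq_mul] at h4
    have h7 : (N.card : ℝ) * (2 * L * M ^ 2 * B.card) ≤ 4 * (2 * L * M ^ 2 * B.card) := by
      gcongr
    linarith
  have hPl : ((3 • X - 3 • X).card : ℝ) ≤ (8 * L * M ^ 2) ^ 6 * B.card := by
    have hZne : Z.Nonempty := ⟨_, Finset.mem_image_of_mem _ hz⟩
    have h := Finset.pluennecke_ruzsa_inequality_nsmul_sub_nsmul_sub hZne X 3 3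
    have h3 := (NNRat.cast_le (K := ℝ)).2 h
    push_cast at h3
    rw [hZ] at h3
    refine h3.trans ?_
    gcongr
    rw [div_le_iff₀ hn]
    exact hX
  have hXm : ∀ t ∈ N, ∀ x ∈ B, t * x ∈ X := fun t ht x hx =>
    Finset.mem_biUnion.2 ⟨t, ht, Finset.mem_image_of_mem _ hx⟩
  have h3X : ∀ x ∈ X, ∀ y ∈ X, ∀ w ∈ X, x + y + w ∈ 3 • X := by
    intro x hx y hy w hw
    rw [succ_nsmul, two_nsmul]
    exact Finset.add_mem_add (Finset.add_mem_add hx hy) hw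
  have hcd' : c - d ≠ 0 := sub_ne_zero.2 hcd
  have himg : ((B₁ ×ˢ B₁).image (fun q => q.1 + ((a - b) / (c - d) + e) * q.2)).card
      ≤ (3 • X - 3 • X).card := by
    apply Finset.card_le_card_of_injOn (fun s => (c - d) * s)
    · intro s hs
      obtain ⟨⟨x, y⟩, hq, rfl⟩ := Finset.mem_image.1 hs
      obtain ⟨hx, hy⟩ := Finset.mem_product.1 hq
      have hx := hB₁B hx
      have hy := hB₁B hy
      simp only at hx hy
      have haN : a ∈ N := by simp [N]
      have hbN : b ∈ N := by simp [N]
      have hcN : c ∈ N := by simp [N]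
      have hdN : d ∈ N := by simp [N]
      rcases he with rfl | rfl
      · have : (c - d) * (x + ((a - b) / (c - d) + 0) * y) =
          (c * x + a * y + c * x) - (d * x + b * y + c * x) := by
          field_simp
          ring
        show (c - d) * (x + ((a - b) / (c - d) + 0) * y) ∈ 3 • X - 3 • X
        rw [this]
        exact Finset.sub_mem_sub
          (h3X _ (hXm _ hcN _ hx) _ (hXm _ haN _ hy) _ (hXm _ hcN _ hx))
          (h3X _ (hXm _ hdN _ hx) _ (hXm _ hbN _ hy) _ (hXm _ hcN _ hx))
      · have : (c - d) * (x + ((a - b) / (c - d) + 1) * y) =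
          (c * x + a * y + c * y) - (d * x + b * y + d * y) := by
          field_simp
          ring
        show (c - d) * (x + ((a - b) / (c - d) + 1) * y) ∈ 3 • X - 3 • X
        rw [this]
        exact Finset.sub_mem_sub
          (h3X _ (hXm _ hcN _ hx) _ (hXm _ haN _ hy) _ (hXm _ hcN _ hy))
          (h3X _ (hXm _ hdN _ hx) _ (hXm _ hbN _ hy) _ (hXm _ hdN _ hy))
    · exact (mul_right_injective₀ hcd').injOn
  have h1 : (B₁.card : ℝ) ^ 2 ≤ 2 * ((8 * L * M ^ 2) ^ 6 * B.card) := by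
    have h2 : ((B₁.card ^ 2 : ℕ) : ℝ) ≤ ((2 * (3 • X - 3 • X).card : ℕ) : ℝ) := by
      exact_mod_cast hcard.trans (Nat.mul_le_mul_left 2 himg)
    push_cast at h2
    linarith
  have h2 : (B.card : ℝ) ^ 2 ≤ (2 * L * B₁.card) ^ 2 := by gcongr
  have h3 : (B.card : ℝ) * B.card ≤ 8 * L ^ 2 * (8 * L * M ^ 2) ^ 6 * B.card := by
    calc (B.card : ℝ) * B.card = (B.card : ℝ) ^ 2 := by ring
      _ ≤ 4 * L ^ 2 * (B₁.card : ℝ) ^ 2 := by rw [mul_pow, mul_pow] at h2; linarith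
      _ ≤ 4 * L ^ 2 * (2 * ((8 * L * M ^ 2) ^ 6 * B.card)) := by gcongr
      _ = _ := by ring
  exact le_of_mul_le_mul_right h3 hn

set_option maxHeartbeats 1000000 in
/-- From multiplicative information on `Y` and `Y + x₀` to a large subset with few differences. -/
lemma refine_diff {F : Type*} [Field F] [DecidableEq F] (Y S : Finset F) (h0 : ∀ y ∈ Y, y ≠ 0)
    (hne : Y.Nonempty) (x₀ : F) (hx₀ : x₀ ≠ 0) (Q : ℝ) (hQ : ((Y / Y).card : ℝ) ≤ Q)
    (hS : ∀ a ∈ Y, ∀ y ∈ Y, y * (a + x₀) / a ∈ S) :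
    ∃ Y' ⊆ Y, (Y.card : ℝ) ≤ 2 * Y'.card ∧
      ((Y' - Y').card : ℝ) * (Y.card : ℝ) ^ 5 ≤ 128 * (S.card : ℝ) ^ 4 * Q ^ 2 := by
  classical
  have hn : (0 : ℝ) < Y.card := by exact_mod_cast hne.card_pos
  have hQ0 : 0 < Q := lt_of_lt_of_le (by exact_mod_cast (hne.div hne).card_pos) hQ
  obtain ⟨r, hr⟩ : ∃ r : F → ℕ, ∀ v, r v = ((Y ×ˢ Y).filter (fun q => q.1 / q.2 = v)).card :=
    ⟨_, fun _ => rfl⟩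
  let τ : ℝ := (Y.card : ℝ) ^ 2 / (8 * Q)
  have hτ : 0 < τ := by positivity
  have hτQ : Q * τ = (Y.card : ℝ) ^ 2 / 8 := by simp only [τ]; field_simp
  obtain ⟨g, hg⟩ : ∃ g : F → F → Prop, ∀ a b, g a b ↔ τ ≤ (r (a / b) : ℝ) :=
    ⟨_, fun _ _ => Iff.rfl⟩
  have hbad : (((Y ×ˢ Y).filter (fun q => ¬ g q.1 q.2)).card : ℝ) ≤ (Y.card : ℝ) ^ 2 / 8 := by
    rw [Finset.card_eq_sum_card_fiberwise (f := fun q : F × F => q.1 / q.2) (t := Y / Y)]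
    · push_cast
      have h1 : ∀ v ∈ Y / Y, ((((Y ×ˢ Y).filter (fun q => ¬ g q.1 q.2)).filter
          (fun q => q.1 / q.2 = v)).card : ℝ) ≤ τ := by
        intro v _
        by_cases hv : τ ≤ (r v : ℝ)
        · rw [Finset.filter_false_of_mem]
          · simpa using hτ.le
          · intro q hq hqv
            apply (Finset.mem_filter.1 hq).2
            rw [hg, hqv]
            exact hv
        · push Not at hv
          refine le_trans ?_ hv.le
          rw [hr]
          exact_mod_cast Finset.card_le_card
            (Finset.filter_subset_filter _ (Finset.filter_subset _ _))
      refine (Finset.sum_le_card_nsmul _ _ _ h1).trans ?_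
      rw [nsmul_eq_mul, ← hτQ]
      gcongr
    · intro q hq
      have := Finset.mem_product.1 (Finset.mem_filter.1 hq).1
      exact Finset.div_mem_div this.1 this.2
  let D : Finset F := ((Y ×ˢ Y).filter (fun q => g q.1 q.2)).image (fun q => q.1 - q.2)
  have hD : (D.card : ℝ) * τ ≤ (S.card : ℝ) ^ 2 := by
    apply popular_bound
    intro δ hδ
    obtain ⟨⟨y₁, y₂⟩, hq, rfl⟩ := Finset.mem_image.1 hδ
    obtain ⟨hq, hgq⟩ := Finset.mem_filter.1 hq
    obtain ⟨hy₁, hy₂⟩ := Finset.mem_product.1 hq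
    simp only at hy₁ hy₂ hgq
    rw [hg] at hgq
    refine hgq.trans ?_
    rw [hr]
    norm_cast
    have z1 := h0 _ hy₁
    have z2 := h0 _ hy₂
    apply Finset.card_le_card_of_injOn
      (fun q => (y₁ * (q.1 + x₀) / q.1, y₂ * (q.2 + x₀) / q.2))
    · rintro ⟨a, b⟩ hab
      obtain ⟨hab, hv⟩ := Finset.mem_filter.1 hab
      obtain ⟨ha, hb⟩ := Finset.mem_product.1 hab
      simp only at ha hb hv
      have za := h0 _ ha
      have zb := h0 _ hb
      refine Finset.mem_filter.2 ⟨Finset.mem_product.2 ⟨hS a ha y₁ hy₁, hS b hb y₂ hy₂⟩, ?_⟩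
      show y₁ * (a + x₀) / a - y₂ * (b + x₀) / b = y₁ - y₂
      rw [div_eq_div_iff zb z2] at hv
      field_simp
      linear_combination (-x₀) * hv
    · rintro ⟨a, b⟩ hab ⟨a', b'⟩ hab' h
      obtain ⟨ha, hb⟩ := Finset.mem_product.1 (Finset.mem_filter.1 hab).1
      obtain ⟨ha', hb'⟩ := Finset.mem_product.1 (Finset.mem_filter.1 hab').1
      have key : ∀ y ∈ Y, ∀ s ∈ Y, ∀ t ∈ Y, y * (s + x₀) / s = y * (t + x₀) / t → s = t := by
        intro y hy s hs t ht hst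
        have zy := h0 _ hy
        have zs := h0 _ hs
        have zt := h0 _ ht
        rw [div_eq_div_iff zs zt] at hst
        have : (y * x₀) * s = (y * x₀) * t := by linear_combination -hst
        exact mul_left_cancel₀ (mul_ne_zero zy hx₀) this
      have e1 := congrArg Prod.fst h
      have e2 := congrArg Prod.snd h
      rw [key y₁ hy₁ a ha a' ha' e1, key y₂ hy₂ b hb b' hb' e2]
  let Y' := Y.filter (fun y => 4 * ((Y.filter (fun z => ¬ g y z)).card : ℝ) ≤ Y.card)
  have hY' : (Y.card : ℝ) ≤ 2 * Y'.card := by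
    have h1 : (((Y ×ˢ Y).filter (fun q => ¬ g q.1 q.2)).card : ℝ)
        = ∑ y ∈ Y, ((Y.filter (fun z => ¬ g y z)).card : ℝ) := by
      simp only [Finset.card_filter, Finset.sum_product]
      push_cast
      rfl
    rw [h1] at hbad
    have h2 : ∑ y ∈ Y, ((Y.card : ℝ) / 4 - if 4 * ((Y.filter (fun z => ¬ g y z)).card : ℝ) ≤ Y.card
        then (Y.card : ℝ) / 4 else 0) ≤ ∑ y ∈ Y, ((Y.filter (fun z => ¬ g y z)).card : ℝ) := by
      apply Finset.sum_le_sum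
      intro y _
      split_ifs with h
      · simp
      · push Not at h
        linarith
    rw [Finset.sum_sub_distrib, ← Finset.sum_filter, Finset.sum_const, Finset.sum_const,
      nsmul_eq_mul, nsmul_eq_mul] at h2
    change _ - (Y'.card : ℝ) * _ ≤ _ at h2
    have h3 := h2.trans hbad
    apply le_of_mul_le_mul_right _ hn
    linarith
  refine ⟨Y', Finset.filter_subset _ _, hY', ?_⟩
  have hDD : ((Y' - Y').card : ℝ) * ((Y.card : ℝ) / 2) ≤ (D.card : ℝ) ^ 2 := by
    apply popular_bound
    intro δ hδ
    obtain ⟨y, hy, w, hw, rfl⟩ := Finset.mem_sub.1 hδ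
    obtain ⟨hyY, hy⟩ := Finset.mem_filter.1 hy
    obtain ⟨hwY, hw⟩ := Finset.mem_filter.1 hw
    let G := Y.filter (fun z => g y z ∧ g w z)
    have hG : (Y.card : ℝ) / 2 ≤ G.card := by
      have h1 : Y ⊆ G ∪ (Y.filter (fun z => ¬ g y z) ∪ Y.filter (fun z => ¬ g w z)) := by
        intro z hz
        simp only [G, Finset.mem_union, Finset.mem_filter]
        tauto
      have h2 := (Finset.card_le_card h1).trans ((Finset.card_union_le _ _).trans
        (Nat.add_le_add_left (Finset.card_union_le _ _) _))
      have h3 : (Y.card : ℝ) ≤ G.card + ((Y.filter (fun z => ¬ g y z)).card +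
        (Y.filter (fun z => ¬ g w z)).card) := by exact_mod_cast h2
      linarith
    refine hG.trans ?_
    norm_cast
    apply Finset.card_le_card_of_injOn (fun z => (y - z, w - z))
    · intro z hz
      obtain ⟨hzY, hz1, hz2⟩ := Finset.mem_filter.1 hz
      refine Finset.mem_filter.2 ⟨Finset.mem_product.2 ⟨?_, ?_⟩, ?_⟩
      · exact Finset.mem_image.2 ⟨(y, z), Finset.mem_filter.2
          ⟨Finset.mem_product.2 ⟨hyY, hzY⟩, hz1⟩, rfl⟩
      · exact Finset.mem_image.2 ⟨(w, z), Finset.mem_filter.2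
          ⟨Finset.mem_product.2 ⟨hwY, hzY⟩, hz2⟩, rfl⟩
      · simp
    · intro z _ z' _ h
      have e := congrArg Prod.fst h
      simpa using e
  have h1 : (D.card : ℝ) * (Y.card : ℝ) ^ 2 ≤ 8 * Q * (S.card : ℝ) ^ 2 := by
    simp only [τ] at hD
    rw [← mul_div_assoc, div_le_iff₀ (by positivity)] at hD
    linarith
  calc ((Y' - Y').card : ℝ) * (Y.card : ℝ) ^ 5
      = 2 * (((Y' - Y').card : ℝ) * ((Y.card : ℝ) / 2)) * (Y.card : ℝ) ^ 4 := by ring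
    _ ≤ 2 * (D.card : ℝ) ^ 2 * (Y.card : ℝ) ^ 4 := by gcongr
    _ = 2 * ((D.card : ℝ) * (Y.card : ℝ) ^ 2) ^ 2 := by ring
    _ ≤ 2 * (8 * Q * (S.card : ℝ) ^ 2) ^ 2 := by gcongr
    _ = _ := by ring

set_option maxHeartbeats 1000000 in
/-- Extraction of a large `Y ⊆ A` such that `x₀ + Y` is multiplicatively structured. -/
lemma extract {F : Type*} [Field F] [DecidableEq F] (A : Finset F) (h0 : ∀ a ∈ A, a ≠ 0)
    (h2 : 2 ≤ A.card) (K : ℝ) (hK1 : 1 ≤ K) (hK : ((A * A).card : ℝ) ≤ K * A.card)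
    (hT : ((Finset.image₂ (fun x y => x * y * (x + y)) A A).card : ℝ) ≤ K * A.card) :
    ∃ x₀ ∈ A, ∃ w : F, ∃ Y ⊆ A, (A.card : ℝ) ≤ 12 * K ^ 3 * Y.card ∧
      ∀ y ∈ Y, ∃ x ∈ A, x₀ * y * (x₀ + y) = x ^ 3 * w := by
  classical
  have hne : A.Nonempty := Finset.card_pos.1 (by omega)
  have hn : (0 : ℝ) < A.card := by exact_mod_cast hne.card_pos
  have hn2 : (2 : ℝ) ≤ A.card := by exact_mod_cast h2
  let f : F × F → F := fun q => q.1 * q.2 * (q.1 + q.2)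
  let P := (A ×ˢ A).filter (fun q => q.1 + q.2 ≠ 0)
  have hP : (A.card : ℝ) ^ 2 ≤ 2 * P.card := by
    have h1 := Finset.card_filter_add_card_filter_not (s := A ×ˢ A)
      (fun q : F × F => q.1 + q.2 ≠ 0)
    have h3 : ((A ×ˢ A).filter (fun q => ¬ (q.1 + q.2 ≠ 0))).card ≤ A.card := by
      apply Finset.card_le_card_of_injOn (fun q => q.1)
      · intro q hq
        exact (Finset.mem_product.1 (Finset.mem_filter.1 hq).1).1
      · rintro ⟨x, y⟩ hq ⟨x', y'⟩ hq' h
        have e : x = x' := h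
        subst e
        have e1 : x + y = 0 := not_not.1 (Finset.mem_filter.1 hq).2
        have e2 : x + y' = 0 := not_not.1 (Finset.mem_filter.1 hq').2
        have : y = y' := add_left_cancel (e1.trans e2.symm)
        rw [this]
    rw [Finset.card_product] at h1
    have h4 : A.card * A.card ≤ P.card + A.card := by
      have : P.card = ((A ×ˢ A).filter (fun q : F × F => q.1 + q.2 ≠ 0)).card := rfl
      omega
    have h5 : (A.card : ℝ) * A.card ≤ P.card + A.card := by exact_mod_cast h4
    nlinarith
  have hPA : ∀ q ∈ P, q.1 ∈ A ∧ q.2 ∈ A ∧ q.1 + q.2 ≠ 0 := by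
    intro q hq
    obtain ⟨h1, h3⟩ := Finset.mem_filter.1 hq
    exact ⟨(Finset.mem_product.1 h1).1, (Finset.mem_product.1 h1).2, h3⟩
  let C := (P ×ˢ P).filter (fun q => f q.1 = f q.2)
  have hC : (A.card : ℝ) ^ 3 ≤ 4 * K * C.card := by
    have h1 := collision_bound P f (Finset.image₂ (fun x y => x * y * (x + y)) A A)
      (fun q hq => Finset.mem_image₂.2 ⟨q.1, (hPA q hq).1, q.2, (hPA q hq).2.1, rfl⟩)
    change _ ≤ _ * C.card at h1
    have h3 : (P.card : ℝ) ^ 2 ≤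
      (Finset.image₂ (fun x y => x * y * (x + y)) A A).card * (C.card : ℝ) := by
      exact_mod_cast h1
    have h4 : (A.card : ℝ) ^ 3 * A.card ≤ 4 * K * C.card * A.card := by
      calc (A.card : ℝ) ^ 3 * A.card = ((A.card : ℝ) ^ 2) ^ 2 := by ring
        _ ≤ (2 * (P.card : ℝ)) ^ 2 := by gcongr
        _ = 4 * (P.card : ℝ) ^ 2 := by ring
        _ ≤ 4 * ((Finset.image₂ (fun x y => x * y * (x + y)) A A).card * (C.card : ℝ)) := by
          linarith
        _ ≤ 4 * ((K * A.card) * (C.card : ℝ)) := by gcongr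
        _ = _ := by ring
    exact le_of_mul_le_mul_right h4 hn
  have hdiv : ((A / A).card : ℝ) ≤ K ^ 2 * A.card := by
    have := mul_plunnecke A h0 hne K hK 1 1
    simpa using this
  obtain ⟨u₀, _, hu₀⟩ := Finset.exists_le_card_fiber_of_nsmul_le_card_of_maps_to
    (s := C) (t := A / A) (f := fun q => q.2.2 / q.2.1) (b := (A.card : ℝ) ^ 2 / (4 * K ^ 3))
    (by
      intro q hq
      have h1 := hPA _ (Finset.mem_product.1 (Finset.mem_filter.1 hq).1).2
      exact Finset.div_mem_div h1.2.1 h1.1)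
    (hne.div hne)
    (by
      rw [nsmul_eq_mul]
      calc ((A / A).card : ℝ) * ((A.card : ℝ) ^ 2 / (4 * K ^ 3))
          ≤ (K ^ 2 * A.card) * ((A.card : ℝ) ^ 2 / (4 * K ^ 3)) := by gcongr
        _ = (A.card : ℝ) ^ 3 / (4 * K) := by field_simp
        _ ≤ C.card := by rw [div_le_iff₀ (by positivity)]; linarith)
  let Φ := C.filter (fun q => q.2.2 / q.2.1 = u₀)
  change _ ≤ (Φ.card : ℝ) at hu₀
  let w := u₀ * (1 + u₀)
  let G := P.filter (fun q => ∃ x ∈ A, f q = x ^ 3 * w)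
  have hΦ : ∀ q ∈ Φ, q.1 ∈ P ∧ q.2.1 ∈ A ∧ q.2.2 = u₀ * q.2.1 ∧ f q.1 = q.2.1 ^ 3 * w := by
    intro q hq
    obtain ⟨h1, h3⟩ := Finset.mem_filter.1 hq
    obtain ⟨h1, h4⟩ := Finset.mem_filter.1 h1
    obtain ⟨h5, h6⟩ := Finset.mem_product.1 h1
    have h7 := hPA _ h6
    have h8 : q.2.2 = u₀ * q.2.1 := by
      rw [← h3]
      field_simp [h0 _ h7.1]
    refine ⟨h5, h7.1, h8, ?_⟩
    rw [h4]
    simp only [f, w]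
    rw [h8]
    ring
  have hΦG : Φ.card ≤ 3 * G.card := by
    apply Finset.card_le_mul_card_image_of_maps_to (f := fun q => q.1)
    · intro q hq
      have h := hΦ q hq
      exact Finset.mem_filter.2 ⟨h.1, q.2.1, h.2.1, h.2.2.2⟩
    · intro q₁ hq₁
      have hq₁P := hPA _ (Finset.mem_filter.1 hq₁).1
      have hf : f q₁ ≠ 0 := mul_ne_zero (mul_ne_zero (h0 _ hq₁P.1) (h0 _ hq₁P.2.1)) hq₁P.2.2
      refine le_trans ?_ ((Multiset.toFinset_card_le _).trans
        (Polynomial.card_nthRoots 3 (f q₁ / w)))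
      apply Finset.card_le_card_of_injOn (fun q => q.2.1)
      · intro q hq
        obtain ⟨h1, h3⟩ := Finset.mem_filter.1 hq
        have h4 := hΦ q h1
        rw [h3] at h4
        have hw : w ≠ 0 := by
          intro hw
          rw [hw, mul_zero] at h4
          exact hf h4.2.2.2
        rw [Finset.mem_coe, Multiset.mem_toFinset, Polynomial.mem_nthRoots (by norm_num)]
        rw [eq_div_iff hw]
        exact h4.2.2.2.symm
      · rintro ⟨q, x, y⟩ hq ⟨q', x', y'⟩ hq' h
        obtain ⟨h1, h3⟩ := Finset.mem_filter.1 hq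
        obtain ⟨h1', h3'⟩ := Finset.mem_filter.1 hq'
        have e1 := (hΦ _ h1).2.2.1
        have e2 := (hΦ _ h1').2.2.1
        simp only at h h3 h3' e1 e2
        rw [h3, h3', e1, e2, h]
  have hG : (A.card : ℝ) ^ 2 ≤ 12 * K ^ 3 * G.card := by
    have h1 : (Φ.card : ℝ) ≤ 3 * G.card := by exact_mod_cast hΦG
    rw [div_le_iff₀ (by positivity)] at hu₀
    have : (Φ.card : ℝ) * (4 * K ^ 3) ≤ 3 * G.card * (4 * K ^ 3) := by gcongr
    linarith
  obtain ⟨x₀, hx₀, hx⟩ := Finset.exists_le_card_fiber_of_nsmul_le_card_of_maps_to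
    (s := G) (t := A) (f := fun q => q.1) (b := (A.card : ℝ) / (12 * K ^ 3))
    (fun q hq => (hPA q (Finset.mem_filter.1 hq).1).1) hne
    (by
      rw [nsmul_eq_mul, ← mul_div_assoc, div_le_iff₀ (by positivity)]
      linarith)
  refine ⟨x₀, hx₀, w, (G.filter (fun q => q.1 = x₀)).image (fun q => q.2), ?_, ?_, ?_⟩
  · intro y hy
    obtain ⟨q, hq, rfl⟩ := Finset.mem_image.1 hy
    exact (hPA q (Finset.mem_filter.1 (Finset.mem_filter.1 hq).1).1).2.1
  · rw [Finset.card_image_of_injOn]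
    · rw [div_le_iff₀ (by positivity)] at hx
      linarith
    · rintro ⟨x, y⟩ hq ⟨x', y'⟩ hq' h
      have e1 : x = x₀ := (Finset.mem_filter.1 hq).2
      have e2 : x' = x₀ := (Finset.mem_filter.1 hq').2
      have e3 : y = y' := h
      rw [e1, e2, e3]
  · intro y hy
    obtain ⟨⟨x, y⟩, hq, rfl⟩ := Finset.mem_image.1 hy
    obtain ⟨hq, e⟩ := Finset.mem_filter.1 hq
    obtain ⟨x₁, hx₁, e₂⟩ := (Finset.mem_filter.1 hq).2
    have e1 : x = x₀ := e
    subst e1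
    exact ⟨x₁, hx₁, e₂⟩

/-- The polynomial inequality behind the theorem. -/
lemma main_bound {p : ℕ} [Fact p.Prime] (A : Finset (ZMod p)) (h0 : ∀ a ∈ A, a ≠ 0)
    (hne : A.Nonempty) (hp : A.card ^ 2 ≤ p) (K : ℝ) (hK1 : 1 ≤ K)
    (hK : ((A * A).card : ℝ) ≤ K * A.card)
    (hT : ((Finset.image₂ (fun x y => x * y * (x + y)) A A).card : ℝ) ≤ K * A.card) :
    (A.card : ℝ) ≤ 24 * 8 * 24 ^ 2 * (8 * 24 * (128 * 12 ^ 5 * 24) ^ 2) ^ 6 * K ^ 800 := by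
  classical
  have hn : (0 : ℝ) < A.card := by exact_mod_cast hne.card_pos
  by_cases h2 : A.card < 2
  · have h1 : (A.card : ℝ) ≤ 1 := by exact_mod_cast Nat.lt_succ_iff.1 h2
    have h3 : 1 ≤ K ^ 800 := one_le_pow₀ hK1
    refine h1.trans ?_
    norm_num1
    linarith
  push Not at h2
  obtain ⟨x₀, hx₀, w, Y, hYA, hY, hYw⟩ := extract A h0 h2 K hK1 hK hT
  have hK0 : 0 < K := by linarith
  have hYpos : (0 : ℝ) < Y.card := by
    by_contra h
    push Not at h
    have h1 : 0 < 12 * K ^ 3 := by positivity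
    nlinarith
  have hYne : Y.Nonempty := Finset.card_pos.1 (by exact_mod_cast hYpos)
  let S := (A ^ 4 / A ^ 2).image (fun x => (w / x₀) * x)
  have hS : (S.card : ℝ) ≤ K ^ 6 * A.card := by
    have h1 : S.card ≤ (A ^ 4 / A ^ 2).card := Finset.card_image_le
    have h3 : (S.card : ℝ) ≤ (A ^ 4 / A ^ 2).card := by exact_mod_cast h1
    exact h3.trans (mul_plunnecke A h0 hne K hK 4 2)
  have hdiv : ((Y / Y).card : ℝ) ≤ K ^ 2 * A.card := by
    have h1 := mul_plunnecke A h0 hne K hK 1 1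
    simp only [pow_one] at h1
    refine le_trans ?_ h1
    exact_mod_cast Finset.card_le_card (Finset.div_subset_div hYA hYA)
  obtain ⟨Y', hY'Y, hY'c, hY'd⟩ := refine_diff Y S (fun y hy => h0 y (hYA hy)) hYne x₀
    (h0 _ hx₀) (K ^ 2 * A.card) hdiv (by
      intro a ha y hy
      obtain ⟨x, hx, e⟩ := hYw a ha
      have za := h0 _ (hYA ha)
      have z0 := h0 _ hx₀
      refine Finset.mem_image.2 ⟨(x ^ 3 * y) / (a * a), ?_, ?_⟩
      · apply Finset.div_mem_div
        · rw [pow_succ]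
          exact Finset.mul_mem_mul (Finset.pow_mem_pow hx) (hYA hy)
        · rw [sq]
          exact Finset.mul_mem_mul (hYA ha) (hYA ha)
      · field_simp
        linear_combination (-y) * e)
  have hY'n : (A.card : ℝ) ≤ 24 * K ^ 3 * Y'.card := by
    have : 12 * K ^ 3 * Y.card ≤ 12 * K ^ 3 * (2 * Y'.card) := by gcongr
    linarith
  have hY'ne : Y'.Nonempty := by
    apply Finset.card_pos.1
    by_contra h
    have h1 : Y'.card = 0 := by omega
    rw [h1, Nat.cast_zero, mul_zero] at hY'n
    linarith
  have hL : ((Y' * Y').card : ℝ) ≤ (24 * K ^ 4) * Y'.card := by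
    have h1 : ((Y' * Y').card : ℝ) ≤ (A * A).card := by
      exact_mod_cast Finset.card_le_card
        (Finset.mul_subset_mul (hY'Y.trans hYA) (hY'Y.trans hYA))
    calc ((Y' * Y').card : ℝ) ≤ K * A.card := h1.trans hK
      _ ≤ K * (24 * K ^ 3 * Y'.card) := by gcongr
      _ = _ := by ring
  have hM : ((Y' - Y').card : ℝ) ≤ (128 * 12 ^ 5 * 24 * K ^ 46) * Y'.card := by
    have h1 : ((Y' - Y').card : ℝ) * (A.card : ℝ) ^ 5 ≤
        (128 * 12 ^ 5 * K ^ 43 * A.card) * (A.card : ℝ) ^ 5 := by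
      calc ((Y' - Y').card : ℝ) * (A.card : ℝ) ^ 5
          ≤ ((Y' - Y').card : ℝ) * (12 * K ^ 3 * Y.card) ^ 5 := by gcongr
        _ = 12 ^ 5 * K ^ 15 * (((Y' - Y').card : ℝ) * (Y.card : ℝ) ^ 5) := by ring
        _ ≤ 12 ^ 5 * K ^ 15 * (128 * (S.card : ℝ) ^ 4 * (K ^ 2 * A.card) ^ 2) := by gcongr
        _ ≤ 12 ^ 5 * K ^ 15 * (128 * (K ^ 6 * A.card) ^ 4 * (K ^ 2 * A.card) ^ 2) := by gcongr
        _ = _ := by ring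
    have h3 := le_of_mul_le_mul_right h1 (by positivity)
    calc ((Y' - Y').card : ℝ) ≤ 128 * 12 ^ 5 * K ^ 43 * A.card := h3
      _ ≤ 128 * 12 ^ 5 * K ^ 43 * (24 * K ^ 3 * Y'.card) := by gcongr
      _ = _ := by ring
  have hsp := sum_product Y' (fun y hy => h0 y (hYA (hY'Y hy))) hY'ne
    ((Nat.pow_le_pow_left (Finset.card_le_card (hY'Y.trans hYA)) 2).trans hp) _ _ hL hM
  calc (A.card : ℝ) ≤ 24 * K ^ 3 * Y'.card := hY'n
    _ ≤ 24 * K ^ 3 * (8 * (24 * K ^ 4) ^ 2 *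
        (8 * (24 * K ^ 4) * (128 * 12 ^ 5 * 24 * K ^ 46) ^ 2) ^ 6) := by gcongr
    _ = 24 * 8 * 24 ^ 2 * (8 * 24 * (128 * 12 ^ 5 * 24) ^ 2) ^ 6 * K ^ 587 := by ring
    _ ≤ _ := by
      apply mul_le_mul_of_nonneg_left _ (by positivity)
      exact pow_le_pow_right₀ hK1 (by norm_num)

/-- Theorem 7: there is an absolute `κ > 0` such that for every prime `p`, every
`A ⊆ 𝔽_p^*` with `|A| ≤ p^{1/2 − 1/500}` and `f(x,y) = xy(x+y)`, one has
`max(|f(A,A)|, |A·A|) ≥ κ·|A|^{1 + 1/800}`. -/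
theorem stmt_15 : ∃ κ : ℝ, 0 < κ ∧ ∀ (p : ℕ), p.Prime →
    ∀ A : Finset (ZMod p), (∀ a ∈ A, a ≠ 0) →
      (A.card : ℝ) ≤ (p : ℝ) ^ ((1 : ℝ) / 2 - 1 / 500) →
      max ((Finset.image₂ (fun x y => x * y * (x + y)) A A).card : ℝ) ((A * A).card : ℝ) ≥
        κ * (A.card : ℝ) ^ ((1 : ℝ) + 1 / 800) := by
  obtain ⟨C, hC, hC1⟩ : ∃ C : ℝ,
      C = 24 * 8 * 24 ^ 2 * (8 * 24 * (128 * 12 ^ 5 * 24) ^ 2) ^ 6 ∧ 1 ≤ C :=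
    ⟨_, rfl, by norm_num1⟩
  refine ⟨1 / (2 * C), by positivity, ?_⟩
  intro p hpp A h0 hA
  have : Fact p.Prime := ⟨hpp⟩
  rcases A.eq_empty_or_nonempty with rfl | hne
  · have : (((∅ : Finset (ZMod p)).card : ℝ)) ^ ((1 : ℝ) + 1 / 800) = 0 := by
      rw [Finset.card_empty, Nat.cast_zero, Real.zero_rpow (by norm_num)]
    rw [this, mul_zero]
    exact le_max_of_le_left (Nat.cast_nonneg _)
  have hn : (0 : ℝ) < A.card := by exact_mod_cast hne.card_pos
  have hp : A.card ^ 2 ≤ p := by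
    have hp1 : (1 : ℝ) ≤ p := by exact_mod_cast hpp.one_lt.le
    have h1 : (A.card : ℝ) ≤ (p : ℝ) ^ ((1 : ℝ) / 2) :=
      hA.trans (Real.rpow_le_rpow_of_exponent_le hp1 (by norm_num))
    have h2 : (A.card : ℝ) ^ 2 ≤ p := by
      calc (A.card : ℝ) ^ 2 ≤ ((p : ℝ) ^ ((1 : ℝ) / 2)) ^ 2 := by gcongr
        _ = (p : ℝ) := by
          rw [← Real.rpow_natCast, ← Real.rpow_mul (by positivity)]
          norm_num
    exact_mod_cast h2
  by_contra hlt
  rw [ge_iff_le, not_le, max_lt_iff] at hlt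
  obtain ⟨hT, hP⟩ := hlt
  rw [Real.rpow_add hn, Real.rpow_one] at hT hP
  obtain ⟨K, hKdef⟩ : ∃ K : ℝ, K = 1 / (2 * C) * (A.card : ℝ) ^ ((1 : ℝ) / 800) := ⟨_, rfl⟩
  have hT' : ((Finset.image₂ (fun x y => x * y * (x + y)) A A).card : ℝ) ≤ K * A.card := by
    rw [hKdef]; linarith
  have hP' : ((A * A).card : ℝ) ≤ K * A.card := by
    rw [hKdef]; linarith
  have hK1 : 1 ≤ K := by
    obtain ⟨z, hz⟩ := hne
    have h : A.card ≤ (A * A).card :=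
      Finset.card_le_card_mul_left_of_injective hz (mul_right_injective₀ (h0 z hz))
    have h' : (A.card : ℝ) ≤ (A * A).card := by exact_mod_cast h
    by_contra hk
    push Not at hk
    nlinarith
  have hb := main_bound A h0 hne hp K hK1 hP' hT'
  rw [← hC, hKdef, mul_pow, ← Real.rpow_natCast ((A.card : ℝ) ^ ((1 : ℝ) / 800)),
    ← Real.rpow_mul hn.le] at hb
  have e : (1 : ℝ) / 800 * ((800 : ℕ) : ℝ) = 1 := by norm_num
  rw [e, Real.rpow_one] at hb
  have hk : (1 / (2 * C)) ^ 800 ≤ 1 / (2 * C) := by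
    apply pow_le_of_le_one (by positivity) _ (by norm_num)
    rw [div_le_one (by positivity)]
    linarith
  have h3 : C * ((1 / (2 * C)) ^ 800 * A.card) ≤ C * (1 / (2 * C) * A.card) := by gcongr
  have h4 : C * (1 / (2 * C) * A.card) = (A.card : ℝ) / 2 := by field_simp
  linarith
end
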